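/- arXiv:0909.4865 — 2 statements merged into one kernel-verified Lean document; each statement's English description precedes it below -/
import Mathlib

section
/- Let $f(x,y)=\sum_{i=0}^{4}\binom{4}{i}a_i\,x^{4-i}y^i$ be a real binary quartic form with distinct roots, i.e. squarefree over $\mathbb{C}$, which has either no real root or exactly two distinct real roots in $\mathbb{P}^1(\mathbb{R})$. The real rank of $f$ is the least $r$ such that $f=\sum_{j=1}^{r}c_j\ell_j^4$ with $c_j\in\mathbb{R}$ and nonzero real linear forms $\ell_j$. Let $$H_f=\begin{pmatrix}a_0&a_1&a_2\\a_1&a_2&a_3\\a_2&a_3&a_4\end{pmatrix}$$ be the Hankel (catalecticant) matrix of $f$. If $\det H_f\neq 0$ (which holds for general $f$), then the real rank of $f$ is $3$. In the exceptional case $\det H_f=0$, the real rank of $f$ is $2$. -/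
namespace BinaryForm

open MvPolynomial

/-- The real linear binary form `a * x + b * y`. -/
noncomputable def lin (a b : ℝ) : MvPolynomial (Fin 2) ℝ := C a * X 0 + C b * X 1

/-- `f` is a sum of `r` terms `c j * (ℓ j) ^ d` with `ℓ j` nonzero real linear forms. -/
def HasDecomp (f : MvPolynomial (Fin 2) ℝ) (d r : ℕ) : Prop :=
  ∃ c a b : Fin r → ℝ, (∀ j, (a j, b j) ≠ (0, 0)) ∧
    f = ∑ j, C (c j) * lin (a j) (b j) ^ d

/-- The real rank of a binary form `f` of degree `d`: the least `r` such that `f` is a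
real linear combination of `r` many `d`-th powers of real linear forms. -/
noncomputable def realRank (f : MvPolynomial (Fin 2) ℝ) (d : ℕ) : ℕ :=
  sInf {r | HasDecomp f d r}

/-- The set of real projective roots of a binary form (for a homogeneous `f`, vanishing at a
point does not depend on the representative). -/
def projRoots (f : MvPolynomial (Fin 2) ℝ) : Set (Projectivization ℝ (Fin 2 → ℝ)) :=
  {p | eval p.rep f = 0}

/-- `f` has distinct roots: it is squarefree as a complex polynomial. -/
def SquarefreeC (f : MvPolynomial (Fin 2) ℝ) : Prop :=
  Squarefree (MvPolynomial.map (algebraMap ℝ ℂ) f)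

/-- The coefficient `a_i` of a binary form of degree `d` written with binomial weights,
`f = ∑ i, (d.choose i) * a_i * x ^ (d - i) * y ^ i`. -/
noncomputable def weightedCoeff (f : MvPolynomial (Fin 2) ℝ) (d i : ℕ) : ℝ :=
  coeff (Finsupp.single 0 (d - i) + Finsupp.single 1 i) f / (d.choose i : ℝ)

/-- The middle Hankel (catalecticant) matrix `(a_{i+j})`, `0 ≤ i, j ≤ 2`, of a binary quartic. -/
noncomputable def catalecticant (f : MvPolynomial (Fin 2) ℝ) : Matrix (Fin 3) (Fin 3) ℝ :=
  Matrix.of fun i j => weightedCoeff f 4 ((i : ℕ) + (j : ℕ))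

end BinaryForm

namespace BinaryForm

open MvPolynomial

theorem eval_lin (v : Fin 2 → ℝ) (a b : ℝ) : eval v (lin a b) = a * v 0 + b * v 1 := by
  simp [lin]

theorem weightedCoeff_add (f g : MvPolynomial (Fin 2) ℝ) (d i : ℕ) :
    weightedCoeff (f + g) d i = weightedCoeff f d i + weightedCoeff g d i := by
  simp [weightedCoeff, add_div]

theorem weightedCoeff_C_mul (c : ℝ) (f : MvPolynomial (Fin 2) ℝ) (d i : ℕ) :
    weightedCoeff (C c * f) d i = c * weightedCoeff f d i := by
  simp [weightedCoeff, mul_div_assoc]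

theorem weightedCoeff_lin_pow (a b : ℝ) {d i : ℕ} (hi : i ≤ d) :
    weightedCoeff (lin a b ^ d) d i = a ^ (d - i) * b ^ i := by
  have hterm : ∀ m : ℕ, (C a * X 0 : MvPolynomial (Fin 2) ℝ) ^ m * (C b * X 1) ^ (d - m) *
      (d.choose m : MvPolynomial (Fin 2) ℝ) =
      monomial (Finsupp.single 0 m + Finsupp.single 1 (d - m))
        (a ^ m * b ^ (d - m) * d.choose m) := by
    intro m
    rw [← map_natCast (C : ℝ →+* MvPolynomial (Fin 2) ℝ), monomial_single_add,
      ← mul_one (a ^ m * b ^ (d - m) * (d.choose m : ℝ)), ← C_mul_monomial, ← X_pow_eq_monomial]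
    simp only [map_mul, map_pow]
    ring
  have hne : (d.choose i : ℝ) ≠ 0 := by exact_mod_cast (Nat.choose_pos hi).ne'
  rw [weightedCoeff, lin, add_pow, coeff_sum, div_eq_iff hne]
  simp_rw [hterm, coeff_monomial]
  rw [Finset.sum_eq_single (d - i)]
  · simp [Nat.sub_sub_self hi, Nat.choose_symm hi]
  · intro m _ hm
    rw [if_neg]
    intro h
    apply hm
    simpa using DFunLike.congr_fun h 0
  · intro h
    exact absurd (Finset.mem_range.2 (by omega)) h

theorem catalecticant_add (f g : MvPolynomial (Fin 2) ℝ) :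
    catalecticant (f + g) = catalecticant f + catalecticant g := by
  ext i j
  simp [catalecticant, weightedCoeff_add]

theorem catalecticant_C_mul_lin_pow (c a b : ℝ) :
    catalecticant (C c * lin a b ^ 4) =
      c • !![a ^ 4, a ^ 3 * b, a ^ 2 * b ^ 2; a ^ 3 * b, a ^ 2 * b ^ 2, a * b ^ 3;
        a ^ 2 * b ^ 2, a * b ^ 3, b ^ 4] := by
  ext i j
  have hij : (i : ℕ) + j ≤ 4 := by omega
  rw [catalecticant, Matrix.of_apply, weightedCoeff_C_mul, weightedCoeff_lin_pow _ _ hij]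
  fin_cases i <;> fin_cases j <;> simp

/-- A binary quartic of real rank at most two has a singular catalecticant. -/
theorem det_catalecticant_eq_zero {f : MvPolynomial (Fin 2) ℝ} {r : ℕ} (hr : r ≤ 2)
    (h : HasDecomp f 4 r) : (catalecticant f).det = 0 := by
  obtain ⟨c, a, b, -, rfl⟩ := h
  interval_cases r
  · simp [catalecticant, weightedCoeff, Matrix.det_fin_three]
  · rw [Fin.sum_univ_one, catalecticant_C_mul_lin_pow, Matrix.det_fin_three]
    simp
    ring
  · rw [Fin.sum_univ_two, catalecticant_add, catalecticant_C_mul_lin_pow,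
      catalecticant_C_mul_lin_pow, Matrix.det_fin_three]
    simp
    ring

theorem HasDecomp.succ {f : MvPolynomial (Fin 2) ℝ} {d r : ℕ} (h : HasDecomp f d r) :
    HasDecomp f d (r + 1) := by
  obtain ⟨c, a, b, hab, rfl⟩ := h
  refine ⟨Fin.cons 0 c, Fin.cons 1 a, Fin.cons 0 b, ?_, ?_⟩
  · intro j
    refine Fin.cases ?_ (fun k => ?_) j
    · simp
    · simpa using hab k
  · rw [Fin.sum_univ_succ]
    simp

theorem SquarefreeC.not_lin_sq_dvd {f : MvPolynomial (Fin 2) ℝ} (hsf : SquarefreeC f) (a b : ℝ) :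
    ¬ lin a b ^ 2 ∣ f := by
  intro h
  have hdvd := map_dvd (MvPolynomial.map (algebraMap ℝ ℂ)) h
  rw [map_pow, pow_two] at hdvd
  have hunit := (hsf _ hdvd).map (MvPolynomial.eval ![-(b : ℂ), (a : ℂ)])
  have h0 : MvPolynomial.eval ![-(b : ℂ), (a : ℂ)]
      (MvPolynomial.map (algebraMap ℝ ℂ) (lin a b)) = 0 := by
    simp [lin]
    ring
  exact not_isUnit_zero (h0 ▸ hunit)

/-- A squarefree form of degree at least two has real rank at least two. -/
theorem two_le_of_hasDecomp {f : MvPolynomial (Fin 2) ℝ} {d r : ℕ} (hd : 2 ≤ d)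
    (hsf : SquarefreeC f) (h : HasDecomp f d r) : 2 ≤ r := by
  obtain ⟨c, a, b, -, rfl⟩ := h
  by_contra! hr
  interval_cases r
  · exact hsf.not_lin_sq_dvd 0 0 (by simp)
  · refine hsf.not_lin_sq_dvd (a 0) (b 0) ?_
    rw [Fin.sum_univ_one]
    exact (pow_dvd_pow _ hd).mul_left _

theorem det_catalecticant_even (A B D p q r s : ℝ) :
    (catalecticant (C A * lin p q ^ 4 + C (6 * B) * (lin p q ^ 2 * lin r s ^ 2) +
      C D * lin r s ^ 4)).det = (p * s - q * r) ^ 6 * (B * (A * D - B ^ 2)) := by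
  have key : C A * lin p q ^ 4 + C (6 * B) * (lin p q ^ 2 * lin r s ^ 2) + C D * lin r s ^ 4 =
      C (A - B) * lin p q ^ 4 + C (D - B) * lin r s ^ 4 +
        C (B / 2) * lin (p + r) (q + s) ^ 4 + C (B / 2) * lin (p - r) (q - s) ^ 4 := by
    refine MvPolynomial.funext fun v => ?_
    simp only [map_add, map_mul, map_pow, eval_C, eval_lin]
    ring
  rw [key]
  simp only [catalecticant_add, catalecticant_C_mul_lin_pow, Matrix.det_fin_three]
  simp
  ring

theorem hasDecomp_even_of_pos {A B D p q r s : ℝ} (hdet : p * s - q * r ≠ 0) (hAB : 0 < A * B) :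
    HasDecomp (C A * lin p q ^ 4 + C (6 * B) * (lin p q ^ 2 * lin r s ^ 2) +
      C D * lin r s ^ 4) 4 3 ∧
    (A * D = B ^ 2 → HasDecomp (C A * lin p q ^ 4 + C (6 * B) * (lin p q ^ 2 * lin r s ^ 2) +
      C D * lin r s ^ 4) 4 2) := by
  have hA : A ≠ 0 := left_ne_zero_of_mul hAB.ne'
  obtain ⟨t, ht⟩ : ∃ t : ℝ, A * t ^ 2 = B := by
    have h0 : 0 ≤ B / A := by
      rw [show B / A = A * B / A ^ 2 by field_simp]
      positivity
    exact ⟨√(B / A), by rw [Real.sq_sqrt h0]; field_simp⟩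
  have hne : ∀ t : ℝ, (p + t * r, q + t * s) ≠ (0, 0) := by
    intro t h
    rw [Prod.mk.injEq] at h
    exact hdet (by linear_combination s * h.1 - r * h.2)
  have hrs : (r, s) ≠ (0, 0) := by
    intro h
    rw [Prod.mk.injEq] at h
    exact hdet (by rw [h.1, h.2]; ring)
  subst ht
  refine ⟨⟨![A / 2, A / 2, D - A * t ^ 4], ![p + t * r, p + -t * r, r], ![q + t * s, q + -t * s, s],
    ?_, ?_⟩, fun hD => ⟨![A / 2, A / 2], ![p + t * r, p + -t * r], ![q + t * s, q + -t * s],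
    ?_, ?_⟩⟩
  · intro j
    fin_cases j
    exacts [hne t, hne (-t), hrs]
  · refine MvPolynomial.funext fun v => ?_
    simp [Fin.sum_univ_three, eval_lin]
    ring
  · intro j
    fin_cases j
    exacts [hne t, hne (-t)]
  · obtain rfl : D = A * t ^ 4 := mul_left_cancel₀ hA (by linear_combination hD)
    refine MvPolynomial.funext fun v => ?_
    simp [Fin.sum_univ_two, eval_lin]
    ring

theorem hasDecomp_even {A B D p q r s : ℝ} (hdet : p * s - q * r ≠ 0) (hB : 6 * B = A + D) :
    HasDecomp (C A * lin p q ^ 4 + C (6 * B) * (lin p q ^ 2 * lin r s ^ 2) +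
      C D * lin r s ^ 4) 4 3 ∧
    (B * (A * D - B ^ 2) = 0 →
      HasDecomp (C A * lin p q ^ 4 + C (6 * B) * (lin p q ^ 2 * lin r s ^ 2) +
        C D * lin r s ^ 4) 4 2) := by
  rcases eq_or_ne B 0 with rfl | hB0
  · have h2 : HasDecomp (C A * lin p q ^ 4 + C (6 * 0) * (lin p q ^ 2 * lin r s ^ 2) +
        C D * lin r s ^ 4) 4 2 := by
      refine ⟨![A, D], ![p, r], ![q, s], ?_, by simp [Fin.sum_univ_two]⟩
      intro j h
      fin_cases j <;> simp at h <;> exact hdet (by rw [h.1, h.2]; ring)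
    exact ⟨h2.succ, fun _ => h2⟩
  · have hpos : 0 < A * B ∨ 0 < D * B := by
      by_contra! h
      have hsum : 6 * B ^ 2 = A * B + D * B := by linear_combination B * hB
      linarith [sq_pos_of_ne_zero hB0, h.1, h.2]
    rcases hpos with h | h
    · obtain ⟨h3, h2⟩ := hasDecomp_even_of_pos (D := D) hdet h
      exact ⟨h3, fun h0 => h2 (by linarith [(mul_eq_zero.1 h0).resolve_left hB0])⟩
    · obtain ⟨h3, h2⟩ := hasDecomp_even_of_pos (D := A) (p := r) (q := s) (r := p) (s := q)
        (fun h0 => hdet (by linear_combination -h0)) h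
      have hswap : C A * lin p q ^ 4 + C (6 * B) * (lin p q ^ 2 * lin r s ^ 2) +
          C D * lin r s ^ 4 = C D * lin r s ^ 4 + C (6 * B) * (lin r s ^ 2 * lin p q ^ 2) +
          C A * lin p q ^ 4 := by ring
      rw [hswap]
      exact ⟨h3, fun h0 => h2 (by linarith [(mul_eq_zero.1 h0).resolve_left hB0])⟩

theorem exists_rotation_diagonal (l m n : ℝ) : ∃ c s α β : ℝ, c ^ 2 + s ^ 2 = 1 ∧
    ∀ x y : ℝ, l * x ^ 2 + 2 * m * x * y + n * y ^ 2 =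
      α * (c * x + s * y) ^ 2 + β * (-s * x + c * y) ^ 2 := by
  have hcont : Continuous fun θ : ℝ =>
      m * (Real.cos θ ^ 2 - Real.sin θ ^ 2) - (l - n) * (Real.cos θ * Real.sin θ) := by
    fun_prop
  obtain ⟨θ, -, hθ⟩ := intermediate_value_uIcc (a := 0) (b := Real.pi / 2) hcont.continuousOn
    (show (0 : ℝ) ∈ _ by
      simp only [Real.cos_zero, Real.sin_zero, Real.cos_pi_div_two, Real.sin_pi_div_two]
      rw [Set.mem_uIcc]
      rcases le_total 0 m with h | h
      · right; constructor <;> linarith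
      · left; constructor <;> linarith)
  simp only at hθ
  set c := Real.cos θ
  set s := Real.sin θ
  have h1 : c ^ 2 + s ^ 2 = 1 := Real.cos_sq_add_sin_sq θ
  refine ⟨c, s, l * c ^ 2 + 2 * m * c * s + n * s ^ 2, l * s ^ 2 - 2 * m * c * s + n * c ^ 2, h1,
    fun x y => ?_⟩
  have hu : c * (c * x + s * y) - s * (-s * x + c * y) = x := by linear_combination x * h1
  have hv : s * (c * x + s * y) + c * (-s * x + c * y) = y := by linear_combination y * h1
  generalize c * x + s * y = u at *
  generalize -s * x + c * y = v at *
  subst hu hv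
  linear_combination 2 * u * v * hθ

/-- A product of a definite and an arbitrary binary quadratic form is even in suitable
coordinates. -/
theorem exists_even_of_definite_mul {f : MvPolynomial (Fin 2) ℝ} {a b l m n : ℝ} (hb : b ≠ 0)
    (hf : f = (lin 1 (-a) ^ 2 + lin 0 b ^ 2) *
      (C l * X 0 ^ 2 + C m * (X 0 * X 1) + C n * X 1 ^ 2)) :
    ∃ A B D p q r s : ℝ, p * s - q * r ≠ 0 ∧ 6 * B = A + D ∧
      f = C A * lin p q ^ 4 + C (6 * B) * (lin p q ^ 2 * lin r s ^ 2) + C D * lin r s ^ 4 := by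
  obtain ⟨c, s, α, β, hcs, hdiag⟩ := exists_rotation_diagonal l
    ((2 * l * a + m) / (2 * b)) ((l * a ^ 2 + m * a + n) / b ^ 2)
  refine ⟨α, (α + β) / 6, β, c, -a * c + s * b, -s, a * s + c * b, ?_, by ring, ?_⟩
  · rw [show c * (a * s + c * b) - (-a * c + s * b) * -s = b * (c ^ 2 + s ^ 2) by ring, hcs]
    simpa using hb
  · rw [hf]
    refine MvPolynomial.funext fun v => ?_
    have h := hdiag (v 0 - a * v 1) (b * v 1)
    simp only [map_add, map_mul, map_pow, eval_C, eval_lin, eval_X]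
    have hq : l * v 0 ^ 2 + m * (v 0 * v 1) + n * v 1 ^ 2 =
        α * (c * (v 0 - a * v 1) + s * (b * v 1)) ^ 2 +
          β * (-s * (v 0 - a * v 1) + c * (b * v 1)) ^ 2 := by
      rw [← h]
      field_simp
      ring
    rw [hq]
    have hsq : (1 * v 0 + -a * v 1) ^ 2 + (0 * v 0 + b * v 1) ^ 2 =
        (c * (v 0 - a * v 1) + s * (b * v 1)) ^ 2 +
          (-s * (v 0 - a * v 1) + c * (b * v 1)) ^ 2 := by
      linear_combination -((v 0 - a * v 1) ^ 2 + (b * v 1) ^ 2) * hcs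
    rw [hsq]
    ring

/-- Distinct zeros of the dehomogenization are distinct projective roots. -/
theorem card_le_encard_projRoots {P : Polynomial ℝ} {n : ℕ} (hn : P.natDegree ≤ n)
    (S : Finset ℝ) (hS : ∀ t ∈ S, P.eval t = 0) :
    (S.card : ℕ∞) ≤ (projRoots (P.homogenize n)).encard := by
  have hne : ∀ t : ℝ, (![t, 1] : Fin 2 → ℝ) ≠ 0 := fun t h => by simpa using congrFun h 1
  let φ : ℝ → Projectivization ℝ (Fin 2 → ℝ) := fun t => Projectivization.mk ℝ ![t, 1] (hne t)
  have hφ : Function.Injective φ := by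
    intro t t' h
    obtain ⟨c, hc⟩ := (Projectivization.mk_eq_mk_iff' ℝ _ _ (hne t) (hne t')).1 h
    have h0 := congrFun hc 0
    have h1 := congrFun hc 1
    simp at h0 h1
    rw [← h0, h1, one_mul]
  calc (S.card : ℕ∞) = (φ '' (S : Set ℝ)).encard := by
        rw [hφ.encard_image, Set.encard_coe_eq_coe_finsetCard]
    _ ≤ _ := by
        refine Set.encard_le_encard ?_
        rintro _ ⟨t, ht, rfl⟩
        obtain ⟨c, hc⟩ := Projectivization.exists_smul_eq_mk_rep ℝ ![t, 1] (hne t)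
        change eval (Projectivization.rep (φ t)) _ = 0
        rw [← hc, Polynomial.eval_homogenize hn]
        · have : (c • ![t, 1] : Fin 2 → ℝ) 0 / (c • ![t, 1] : Fin 2 → ℝ) 1 = t := by
            simp [Units.smul_def]
          rw [this, hS t ht, zero_mul]
        · simp [Units.smul_def]

/-- A squarefree binary form with at most `n - 2` real roots has a nonreal root. -/
theorem exists_nonreal_root {P : Polynomial ℝ} {n : ℕ} (hn : P.natDegree ≤ n + 2)
    (hsf : SquarefreeC (P.homogenize (n + 2)))
    (hroots : (projRoots (P.homogenize (n + 2))).encard ≤ n) :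
    ∃ z : ℂ, Polynomial.aeval z P = 0 ∧ z.im ≠ 0 := by
  by_contra! hreal
  have hP0 : P ≠ 0 := by
    rintro rfl
    exact hsf.not_lin_sq_dvd 0 0 (by simp)
  have hsplits : P.Splits := by
    refine Polynomial.Splits.of_splits_map (algebraMap ℝ ℂ) (IsAlgClosed.splits _) fun z hz => ?_
    rw [Polynomial.mem_roots', Polynomial.IsRoot.def, Polynomial.eval_map_algebraMap] at hz
    exact ⟨z.re, Complex.ext rfl (hreal z hz.2).symm⟩
  have hnodup : P.roots.Nodup := by
    rw [Multiset.nodup_iff_count_le_one]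
    intro t
    rw [Polynomial.count_roots]
    by_contra! h
    obtain ⟨Q, hQ⟩ := (Polynomial.le_rootMultiplicity_iff hP0).1 h
    have hQ0 : Q ≠ 0 := by
      rintro rfl
      exact hP0 (by simpa using hQ)
    have hdeg : Q.natDegree ≤ n := by
      have := congrArg Polynomial.natDegree hQ
      rw [Polynomial.natDegree_mul (pow_ne_zero _ (Polynomial.X_sub_C_ne_zero t)) hQ0,
        Polynomial.natDegree_pow, Polynomial.natDegree_X_sub_C] at this
      omega
    refine hsf.not_lin_sq_dvd 1 (-t) ?_
    have hlin : (Polynomial.X - Polynomial.C t : Polynomial ℝ).homogenize 1 = lin 1 (-t) := by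
      rw [Polynomial.homogenize_sub, Polynomial.homogenize_X one_ne_zero, Polynomial.homogenize_C]
      simp [lin, sub_eq_add_neg]
    have hfac : P = (Polynomial.X - Polynomial.C t) * (Polynomial.X - Polynomial.C t) * Q := by
      rw [hQ]; ring
    rw [hfac, show n + 2 = 1 + 1 + n by ring, Polynomial.homogenize_mul _ _ _ hdeg,
      Polynomial.homogenize_mul _ _ (Polynomial.natDegree_X_sub_C_le t)
        (Polynomial.natDegree_X_sub_C_le t), hlin, ← pow_two]
    · exact dvd_mul_right _ _
    · rw [← pow_two]
      simp
  have hcard : n < P.natDegree := by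
    by_contra! h
    refine hsf.not_lin_sq_dvd 0 1 ?_
    have := Polynomial.homogenize_mul P 1 h (n := 2) (by simp)
    rw [mul_one, Polynomial.homogenize_one] at this
    rw [this]
    simp [lin]
  have := card_le_encard_projRoots hn P.roots.toFinset
    (fun t ht => (Polynomial.mem_roots'.1 (Multiset.mem_toFinset.1 ht)).2)
  rw [Multiset.toFinset_card_of_nodup hnodup, ← hsplits.natDegree_eq_card_roots] at this
  exact absurd (Nat.cast_le.1 (this.trans hroots)) (by omega)

theorem exists_even_of_encard_le {f : MvPolynomial (Fin 2) ℝ} (hf : f.IsHomogeneous 4)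
    (hsf : SquarefreeC f) (hroots : (projRoots f).encard ≤ 2) :
    ∃ A B D p q r s : ℝ, p * s - q * r ≠ 0 ∧ 6 * B = A + D ∧
      f = C A * lin p q ^ 4 + C (6 * B) * (lin p q ^ 2 * lin r s ^ 2) + C D * lin r s ^ 4 := by
  obtain ⟨P, hP, rfl⟩ : ∃ P : Polynomial ℝ, P.natDegree ≤ 4 ∧ P.homogenize 4 = f := by
    refine ⟨aeval ![Polynomial.X, 1] f, ?_, Polynomial.homogenize_eq_of_isHomogeneous hf rfl⟩
    rw [f.as_sum, map_sum]
    refine Polynomial.natDegree_sum_le_of_forall_le _ _ fun d hd => ?_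
    have hdeg : d 0 + d 1 = 4 := by
      simpa [Finsupp.weight_apply, Finsupp.sum_fintype] using hf (mem_support_iff.1 hd)
    rw [aeval_monomial]
    simp only [Finsupp.prod_fintype, Fin.prod_univ_two, pow_zero, implies_true]
    simp only [Matrix.cons_val_zero, Matrix.cons_val_one, one_pow, mul_one,
      ← Polynomial.C_eq_algebraMap]
    exact (Polynomial.natDegree_C_mul_X_pow_le _ _).trans (by omega)
  obtain ⟨z, hz, him⟩ := exists_nonreal_root (n := 2) hP hsf (by simpa using hroots)
  obtain ⟨Q, rfl⟩ := P.quadratic_dvd_of_aeval_eq_zero_im_ne_zero hz him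
  set R : Polynomial ℝ :=
    Polynomial.X ^ 2 - Polynomial.C (2 * z.re) * Polynomial.X + Polynomial.C (‖z‖ ^ 2) with hR
  have hRdeg : R.natDegree = 2 := by
    rw [hR]
    compute_degree!
  have hQdeg : Q.natDegree ≤ 2 := by
    rcases eq_or_ne Q 0 with rfl | hQ0
    · simp
    · have hR0 : R ≠ 0 := by
        intro h
        simp [h] at hRdeg
      rw [Polynomial.natDegree_mul hR0 hQ0] at hP
      omega
  refine exists_even_of_definite_mul him (a := z.re) (l := Q.coeff 2) (m := Q.coeff 1)
    (n := Q.coeff 0) ?_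
  rw [show 4 = 2 + 2 from rfl, Polynomial.homogenize_mul _ _ hRdeg.le hQdeg]
  congr 1
  · rw [hR, Complex.sq_norm, Complex.normSq_apply, Polynomial.homogenize_add,
      Polynomial.homogenize_sub, Polynomial.homogenize_C_mul, Polynomial.homogenize_X two_ne_zero,
      Polynomial.homogenize_C, Polynomial.homogenize_X_pow le_rfl]
    refine MvPolynomial.funext fun v => ?_
    simp [eval_lin]
    ring
  · conv_lhs => rw [Polynomial.eq_quadratic_of_degree_le_two
      (Polynomial.natDegree_le_iff_degree_le.1 hQdeg)]
    rw [Polynomial.homogenize_add, Polynomial.homogenize_add, Polynomial.homogenize_C_mul,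
      Polynomial.homogenize_C_mul, Polynomial.homogenize_X two_ne_zero, Polynomial.homogenize_C,
      Polynomial.homogenize_X_pow le_rfl]
    simp

end BinaryForm

theorem stmt12 (f : MvPolynomial (Fin 2) ℝ) (hf : f.IsHomogeneous 4)
    (hsf : BinaryForm.SquarefreeC f)
    (hroots : (BinaryForm.projRoots f).encard = 0 ∨ (BinaryForm.projRoots f).encard = 2) :
    ((BinaryForm.catalecticant f).det ≠ 0 → BinaryForm.realRank f 4 = 3) ∧
    ((BinaryForm.catalecticant f).det = 0 → BinaryForm.realRank f 4 = 2) := by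
  obtain ⟨A, B, D, p, q, r, s, hdet, hB, hfeq⟩ := BinaryForm.exists_even_of_encard_le hf hsf
    (by rcases hroots with h | h <;> simp [h])
  obtain ⟨h3, h2⟩ := BinaryForm.hasDecomp_even hdet hB
  have hcat := BinaryForm.det_catalecticant_even A B D p q r s
  rw [← hfeq] at h3 h2 hcat
  refine ⟨fun h => le_antisymm (Nat.sInf_le h3) (le_csInf ⟨3, h3⟩ fun k hk => ?_), fun h => ?_⟩
  · by_contra! hlt
    exact h (BinaryForm.det_catalecticant_eq_zero (by omega) hk)
  · rw [hcat] at h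
    have hrank := h2 ((mul_eq_zero.1 h).resolve_left (pow_ne_zero _ hdet))
    exact le_antisymm (Nat.sInf_le hrank)
      (le_csInf ⟨2, hrank⟩ fun k hk => BinaryForm.two_le_of_hasDecomp (by norm_num) hsf hk)
end

section
/- Let $f(x,y)=\sum_{i=0}^5\binom5i\alpha_i x^{5-i}y^i$ be a real binary quintic with distinct roots (squarefree over $\mathbb C$), and suppose that $f$ has exactly one or exactly three distinct real roots in $\mathbb P^1(\mathbb R)$. The real rank of $f$ is the least $r$ such that $f=\sum_{j=1}^r c_j\ell_j^5$ with $c_j\in\mathbb R$ and nonzero real linear forms $\ell_j$. Let $H=(\alpha_{i+j})_{0\le i\le 2,\,0\le j\le 3}$ be the $3\times4$ catalecticant matrix of $f$, let $\beta_i$ be $(-1)^i$ times the $3\times 3$ minor of $H$ obtained by deleting column $i$ ($0\le i\le 3$), and let $I_{12}(f)=\Delta(\beta)$ be the discriminant of the binary cubic $\beta_0x^3+\beta_1x^2y+\beta_2xy^2+\beta_3y^3$, where for a cubic $a_0x^3+3a_1x^2y+3a_2xy^2+a_3y^3$ we set $\Delta=4(a_0a_2-a_1^2)(a_1a_3-a_2^2)-(a_0a_3-a_1a_2)^2$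 (positive exactly when the cubic has three distinct real roots). Then: 1. the real rank of $f$ is at least $2$ and at most $4$; 2. if $H$ has maximal rank $3$ (which holds for general $f$, and in particular whenever $I_{12}(f)\ne0$), then the real rank of $f$ is $3$ or $4$; 3. the real rank of $f$ is $3$ if and only if $I_{12}(f)>0$, and it is $4$ if $I_{12}(f)<0$. -/
open MvPolynomial

noncomputable section

/-- The real linear binary form `a·x + b·y`. -/
def lin (a b : ℝ) : MvPolynomial (Fin 2) ℝ := C a * X 0 + C b * X 1

/-- `f` is a sum of `r` terms `cⱼ · ℓⱼ^d` with `ℓⱼ` nonzero real linear forms. -/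
def HasDecomp (f : MvPolynomial (Fin 2) ℝ) (d r : ℕ) : Prop :=
  ∃ c a b : Fin r → ℝ, (∀ j, (a j, b j) ≠ (0, 0)) ∧
    f = ∑ j, C (c j) * lin (a j) (b j) ^ d

/-- The real rank of a binary form of degree `d`: the least number of `d`-th powers
of real linear forms needed to write `f` as a real linear combination of them. -/
def realRank (f : MvPolynomial (Fin 2) ℝ) (d : ℕ) : ℕ :=
  sInf {r | HasDecomp f d r}

/-- The set of real projective roots of a binary form. -/
def projRoots (f : MvPolynomial (Fin 2) ℝ) : Set (Projectivization ℝ (Fin 2 → ℝ)) :=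
  {p | eval p.rep f = 0}

/-- `f` has distinct roots, i.e. it is squarefree as a complex polynomial. -/
def SquarefreeC (f : MvPolynomial (Fin 2) ℝ) : Prop :=
  Squarefree (MvPolynomial.map (algebraMap ℝ ℂ) f)

/-- The coefficients `α₀, …, α₅` of a binary quintic written as
`∑ i, (5 choose i) · αᵢ · x^(5-i) · y^i`. -/
def quinticCoeff (f : MvPolynomial (Fin 2) ℝ) (i : ℕ) : ℝ :=
  f.coeff (Finsupp.single 0 (5 - i) + Finsupp.single 1 i) / (Nat.choose 5 i : ℝ)

/-- The `3 × 4` Hankel (catalecticant) matrix `(α_{i+j})` of a binary quintic. -/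
def catalecticant (f : MvPolynomial (Fin 2) ℝ) : Matrix (Fin 3) (Fin 4) ℝ :=
  Matrix.of fun i j => quinticCoeff f (i.val + j.val)

/-- `(-1)^i` times the `3 × 3` minor of the catalecticant with column `i` deleted. -/
def apolarCoeff (f : MvPolynomial (Fin 2) ℝ) (i : Fin 4) : ℝ :=
  (-1) ^ i.val * ((catalecticant f).submatrix id i.succAbove).det

/-- The discriminant of the binary cubic `a₀ x³ + 3 a₁ x² y + 3 a₂ x y² + a₃ y³`, positive
exactly if the cubic has three distinct real roots. -/
def cubicDisc (a₀ a₁ a₂ a₃ : ℝ) : ℝ :=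
  4 * (a₀ * a₂ - a₁ ^ 2) * (a₁ * a₃ - a₂ ^ 2) - (a₀ * a₃ - a₁ * a₂) ^ 2

/-- The invariant of degree 12 of a binary quintic: the discriminant of the cubic
`β₀ x³ + β₁ x² y + β₂ x y² + β₃ y³` whose coefficients are the signed maximal minors
of the catalecticant. -/
def I12 (f : MvPolynomial (Fin 2) ℝ) : ℝ :=
  cubicDisc (apolarCoeff f 0) (apolarCoeff f 1 / 3) (apolarCoeff f 2 / 3) (apolarCoeff f 3)

end

/-! ### Binary cubics and their rotations -/

section Rotation

variable {R : Type*} [CommRing R]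

/-- Coefficient of `X³` in `g(X - tY, tX + Y)`, where `g = g₀x³ + g₁x²y + g₂xy² + g₃y³`. -/
def rotCoeff₀ (g₀ g₁ g₂ g₃ t : R) : R := g₀ + g₁ * t + g₂ * t ^ 2 + g₃ * t ^ 3

/-- Coefficient of `X²Y` in `g(X - tY, tX + Y)`. -/
def rotCoeff₁ (g₀ g₁ g₂ g₃ t : R) : R :=
  -3 * g₀ * t + g₁ * (1 - 2 * t ^ 2) + g₂ * (2 * t - t ^ 3) + 3 * g₃ * t ^ 2

/-- Coefficient of `XY²` in `g(X - tY, tX + Y)`. -/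
def rotCoeff₂ (g₀ g₁ g₂ g₃ t : R) : R :=
  3 * g₀ * t ^ 2 + g₁ * (t ^ 3 - 2 * t) + g₂ * (1 - 2 * t ^ 2) + 3 * g₃ * t

/-- Coefficient of `Y³` in `g(X - tY, tX + Y)`. -/
def rotCoeff₃ (g₀ g₁ g₂ g₃ t : R) : R := -g₀ * t ^ 3 + g₁ * t ^ 2 - g₂ * t + g₃

theorem rotCoeff_spec (g₀ g₁ g₂ g₃ t x y : R) :
    g₀ * (x - t * y) ^ 3 + g₁ * (x - t * y) ^ 2 * (t * x + y) +
      g₂ * (x - t * y) * (t * x + y) ^ 2 + g₃ * (t * x + y) ^ 3 =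
    rotCoeff₀ g₀ g₁ g₂ g₃ t * x ^ 3 + rotCoeff₁ g₀ g₁ g₂ g₃ t * x ^ 2 * y +
      rotCoeff₂ g₀ g₁ g₂ g₃ t * x * y ^ 2 + rotCoeff₃ g₀ g₁ g₂ g₃ t * y ^ 3 := by
  simp only [rotCoeff₀, rotCoeff₁, rotCoeff₂, rotCoeff₃]
  ring

/-- The outer coefficient at `X²` of the quadratic form apolar to `∂²/∂X∂Y` of
`(X² + Y²) g(X - tY, tX + Y)`, up to a scalar. -/
def rotMinor₀ (g₀ g₁ g₂ g₃ t : R) : R :=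
  2 * rotCoeff₂ g₀ g₁ g₂ g₃ t * (rotCoeff₀ g₀ g₁ g₂ g₃ t + rotCoeff₂ g₀ g₁ g₂ g₃ t) -
    (rotCoeff₁ g₀ g₁ g₂ g₃ t + rotCoeff₃ g₀ g₁ g₂ g₃ t) ^ 2

/-- The outer coefficient at `Y²` of the quadratic form apolar to `∂²/∂X∂Y` of
`(X² + Y²) g(X - tY, tX + Y)`, up to a scalar. -/
def rotMinor₁ (g₀ g₁ g₂ g₃ t : R) : R :=
  2 * rotCoeff₁ g₀ g₁ g₂ g₃ t * (rotCoeff₁ g₀ g₁ g₂ g₃ t + rotCoeff₃ g₀ g₁ g₂ g₃ t) -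
    (rotCoeff₀ g₀ g₁ g₂ g₃ t + rotCoeff₂ g₀ g₁ g₂ g₃ t) ^ 2

theorem eval_rotMinor₀ (g₀ g₁ g₂ g₃ t : R) :
    (rotMinor₀ (Polynomial.C g₀) (Polynomial.C g₁) (Polynomial.C g₂) (Polynomial.C g₃)
      Polynomial.X).eval t = rotMinor₀ g₀ g₁ g₂ g₃ t := by
  simp [rotMinor₀, rotCoeff₀, rotCoeff₁, rotCoeff₂, rotCoeff₃]

theorem eval_rotMinor₁ (g₀ g₁ g₂ g₃ t : R) :
    (rotMinor₁ (Polynomial.C g₀) (Polynomial.C g₁) (Polynomial.C g₂) (Polynomial.C g₃)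
      Polynomial.X).eval t = rotMinor₁ g₀ g₁ g₂ g₃ t := by
  simp [rotMinor₁, rotCoeff₀, rotCoeff₁, rotCoeff₂, rotCoeff₃]

end Rotation

theorem sq_add_sq_pos_of_ne {a b c d : ℝ} (h : a ≠ c ∨ b ≠ d) :
    0 < (a - c) ^ 2 + (b - d) ^ 2 := by
  rcases h with h | h
  · have := pow_pos (abs_pos.2 (sub_ne_zero.2 h)) 2
    rw [sq_abs] at this
    positivity
  · have := pow_pos (abs_pos.2 (sub_ne_zero.2 h)) 2
    rw [sq_abs] at this
    positivity

theorem rotMinor₀_polynomial_ne_zero {g₀ g₁ g₂ g₃ : ℝ} (h : g₀ ≠ g₂ ∨ g₁ ≠ g₃) :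
    rotMinor₀ (Polynomial.C g₀) (Polynomial.C g₁) (Polynomial.C g₂) (Polynomial.C g₃)
      Polynomial.X ≠ 0 := by
  intro h0
  have hz : ∀ t, rotMinor₀ g₀ g₁ g₂ g₃ t = 0 := fun t => by
    rw [← eval_rotMinor₀, h0, Polynomial.eval_zero]
  have h1 := hz 2
  have h2 := hz (-1 / 2)
  have h3 := hz (-3)
  have h4 := hz (1 / 3)
  have hpos := sq_add_sq_pos_of_ne h
  simp only [rotMinor₀, rotCoeff₀, rotCoeff₁, rotCoeff₂, rotCoeff₃] at h1 h2 h3 h4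
  linarith

theorem rotMinor₁_polynomial_ne_zero {g₀ g₁ g₂ g₃ : ℝ} (h : g₀ ≠ g₂ ∨ g₁ ≠ g₃) :
    rotMinor₁ (Polynomial.C g₀) (Polynomial.C g₁) (Polynomial.C g₂) (Polynomial.C g₃)
      Polynomial.X ≠ 0 := by
  intro h0
  have hz : ∀ t, rotMinor₁ g₀ g₁ g₂ g₃ t = 0 := fun t => by
    rw [← eval_rotMinor₁, h0, Polynomial.eval_zero]
  have h1 := hz 2
  have h2 := hz (-1 / 2)
  have h3 := hz (-3)
  have h4 := hz (1 / 3)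
  have hpos := sq_add_sq_pos_of_ne h
  simp only [rotMinor₁, rotCoeff₀, rotCoeff₁, rotCoeff₂, rotCoeff₃] at h1 h2 h3 h4
  linarith

theorem exists_rotMinor_add_pos {g₀ g₁ g₂ g₃ : ℝ} (h : g₀ ≠ g₂ ∨ g₁ ≠ g₃) :
    ∃ t, 0 < rotMinor₀ g₀ g₁ g₂ g₃ t + rotMinor₁ g₀ g₁ g₂ g₃ t := by
  by_contra! hn
  have h1 := hn 0
  have h2 := hn 1
  have hpos := sq_add_sq_pos_of_ne h
  simp only [rotMinor₀, rotMinor₁, rotCoeff₀, rotCoeff₁, rotCoeff₂, rotCoeff₃] at h1 h2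
  linarith

theorem exists_rotation {g₀ g₁ g₂ g₃ : ℝ} (h : g₀ ≠ g₂ ∨ g₁ ≠ g₃) :
    ∃ t, 0 < rotMinor₀ g₀ g₁ g₂ g₃ t + rotMinor₁ g₀ g₁ g₂ g₃ t ∧
      rotMinor₀ g₀ g₁ g₂ g₃ t ≠ 0 ∧ rotMinor₁ g₀ g₁ g₂ g₃ t ≠ 0 := by
  set P := rotMinor₀ (Polynomial.C g₀) (Polynomial.C g₁) (Polynomial.C g₂) (Polynomial.C g₃)
      Polynomial.X with hP
  set Q := rotMinor₁ (Polynomial.C g₀) (Polynomial.C g₁) (Polynomial.C g₂) (Polynomial.C g₃)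
      Polynomial.X with hQ
  obtain ⟨t₀, ht₀⟩ := exists_rotMinor_add_pos h
  have hopen : IsOpen {t | 0 < rotMinor₀ g₀ g₁ g₂ g₃ t + rotMinor₁ g₀ g₁ g₂ g₃ t} := by
    refine isOpen_lt continuous_const ?_
    have := P.continuous.add Q.continuous
    simp only [hP, hQ, eval_rotMinor₀, eval_rotMinor₁] at this
    exact this
  have hinf := infinite_of_mem_nhds t₀ (hopen.mem_nhds ht₀)
  by_contra! hn
  have hPQ : P * Q = 0 := by
    refine Polynomial.eq_zero_of_infinite_isRoot _ (hinf.mono fun t ht => ?_)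
    change (P * Q).eval t = 0
    rw [Polynomial.eval_mul, hP, hQ, eval_rotMinor₀, eval_rotMinor₁, mul_eq_zero,
      or_iff_not_imp_left]
    exact hn t ht
  exact mul_ne_zero (rotMinor₀_polynomial_ne_zero h) (rotMinor₁_polynomial_ne_zero h) hPQ

/-! ### Moment sequences -/

/-- A binary cubic whose apolar quadratic form `E₀x² - Nxy + E₁y²` has positive trace
`E₀ + E₁` has a single real root, i.e. the quadratic form is indefinite. -/
theorem apolar_disc_pos {c₀ c₁ c₂ c₃ : ℝ}
    (hT : 0 < (c₁ * c₃ - c₂ ^ 2) + (c₀ * c₂ - c₁ ^ 2)) :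
    0 < (c₀ * c₃ - c₁ * c₂) ^ 2 - 4 * (c₁ * c₃ - c₂ ^ 2) * (c₀ * c₂ - c₁ ^ 2) := by
  obtain ⟨e₁, he₁⟩ : ∃ x, x = c₀ + c₂ := ⟨_, rfl⟩
  obtain ⟨e₂, he₂⟩ : ∃ x, x = c₁ + c₃ := ⟨_, rfl⟩
  obtain ⟨a₁, ha₁⟩ : ∃ x, x = c₀ - 3 * c₂ := ⟨_, rfl⟩
  obtain ⟨a₂, ha₂⟩ : ∃ x, x = 3 * c₁ - c₃ := ⟨_, rfl⟩
  obtain ⟨w, hw⟩ : ∃ w, w = (e₁ ^ 3 - 3 * e₁ * e₂ ^ 2) * a₁ + (3 * e₁ ^ 2 * e₂ - e₂ ^ 3) * a₂ :=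
    ⟨_, rfl⟩
  obtain ⟨E, hE⟩ : ∃ E, E = √(e₁ ^ 2 + e₂ ^ 2) := ⟨_, rfl⟩
  obtain ⟨S, hS⟩ : ∃ S, S = √(a₁ ^ 2 + a₂ ^ 2) := ⟨_, rfl⟩
  have hE0 : 0 ≤ E := hE ▸ Real.sqrt_nonneg _
  have hS0 : 0 ≤ S := hS ▸ Real.sqrt_nonneg _
  have hE2 : E ^ 2 = e₁ ^ 2 + e₂ ^ 2 := by rw [hE, Real.sq_sqrt (by positivity)]
  have hS2 : S ^ 2 = a₁ ^ 2 + a₂ ^ 2 := by rw [hS, Real.sq_sqrt (by positivity)]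
  have hwle : w ≤ E ^ 3 * S := by
    refine abs_le_of_sq_le_sq' ?_ (by positivity) |>.2
    have : (E ^ 3 * S) ^ 2 = (E ^ 2) ^ 3 * S ^ 2 := by ring
    rw [this, hE2, hS2, hw]
    nlinarith [sq_nonneg ((e₁ ^ 3 - 3 * e₁ * e₂ ^ 2) * a₂ - (3 * e₁ ^ 2 * e₂ - e₂ ^ 3) * a₁)]
  have hES : S < E := by
    refine lt_of_pow_lt_pow_left₀ 2 hE0 ?_
    rw [hE2, hS2, he₁, he₂, ha₁, ha₂]
    nlinarith
  have key : 64 * ((c₀ * c₃ - c₁ * c₂) ^ 2 - 4 * (c₁ * c₃ - c₂ ^ 2) * (c₀ * c₂ - c₁ ^ 2)) =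
      4 * (E ^ 2 * S ^ 2 + (E ^ 2) ^ 2 - 2 * w) - (E ^ 2 - S ^ 2) ^ 2 := by
    rw [hE2, hS2, hw, he₁, he₂, ha₁, ha₂]
    ring
  have h3 : 0 < (E - S) ^ 3 * (3 * E + S) := by
    have := sub_pos.2 hES
    have : 0 < 3 * E + S := by linarith
    positivity
  nlinarith

theorem exists_quadratic_roots {a b c : ℝ} (ha : a ≠ 0) (h : 0 < b ^ 2 - 4 * a * c) :
    ∃ r s, r ≠ s ∧ b = -a * (r + s) ∧ c = a * (r * s) := by
  have hs := Real.sq_sqrt h.le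
  have hp := Real.sqrt_pos.2 h
  refine ⟨(-b + √(b ^ 2 - 4 * a * c)) / (2 * a), (-b - √(b ^ 2 - 4 * a * c)) / (2 * a), ?_, ?_, ?_⟩
  · intro heq
    have := (div_left_inj' (mul_ne_zero two_ne_zero ha)).1 heq
    linarith
  · field_simp
    ring
  · rw [div_mul_div_comm, show (-b + √(b ^ 2 - 4 * a * c)) * (-b - √(b ^ 2 - 4 * a * c)) =
      4 * a * c by linear_combination -hs]
    field_simp
    norm_num

theorem exists_two_moments {c₀ c₁ c₂ c₃ : ℝ} (h₀ : c₁ * c₃ - c₂ ^ 2 ≠ 0)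
    (h₁ : c₀ * c₂ - c₁ ^ 2 ≠ 0)
    (hd : 0 < (c₀ * c₃ - c₁ * c₂) ^ 2 - 4 * (c₁ * c₃ - c₂ ^ 2) * (c₀ * c₂ - c₁ ^ 2)) :
    ∃ r s p q : ℝ, c₀ = p * r + q * s ∧ c₁ = p * r ^ 2 + q * s ^ 2 ∧
      c₂ = p * r ^ 3 + q * s ^ 3 ∧ c₃ = p * r ^ 4 + q * s ^ 4 := by
  obtain ⟨r, s, hrs, hb, hc⟩ := exists_quadratic_roots (a := c₀ * c₂ - c₁ ^ 2)
    (b := -(c₀ * c₃ - c₁ * c₂)) (c := c₁ * c₃ - c₂ ^ 2) h₁ (by linarith)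
  have hr : r ≠ 0 := by rintro rfl; simp at hc; exact h₀ hc
  have hs : s ≠ 0 := by rintro rfl; simp at hc; exact h₀ hc
  have hsub := sub_ne_zero.2 hrs
  have h2 : c₂ = (r + s) * c₁ - r * s * c₀ := by
    apply mul_left_cancel₀ h₁
    linear_combination -c₁ * hb - c₀ * hc
  have h3 : c₃ = (r + s) * c₂ - r * s * c₁ := by
    apply mul_left_cancel₀ h₁
    linear_combination -c₂ * hb - c₁ * hc
  refine ⟨r, s, (c₁ - s * c₀) / ((r - s) * r), (r * c₀ - c₁) / ((r - s) * s), ?_, ?_, ?_, ?_⟩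
  · field_simp; ring
  · field_simp; ring
  · rw [h2]; field_simp; ring
  · rw [h3, h2]; field_simp; ring

theorem exists_cubic_root {a : ℝ} (ha : a ≠ 0) (b c d : ℝ) :
    ∃ x : ℝ, a * x ^ 3 + b * x ^ 2 + c * x + d = 0 := by
  obtain ⟨B, hB⟩ : ∃ B, B = b / a := ⟨_, rfl⟩
  obtain ⟨C, hC⟩ : ∃ C, C = c / a := ⟨_, rfl⟩
  obtain ⟨D, hD⟩ : ∃ D, D = d / a := ⟨_, rfl⟩
  obtain ⟨M, hM⟩ : ∃ M, M = 1 + |B| + |C| + |D| := ⟨_, rfl⟩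
  have hM1 : 1 ≤ M := by rw [hM]; linarith [abs_nonneg B, abs_nonneg C, abs_nonneg D]
  have hM2 : M ≤ M ^ 2 := by nlinarith
  have hBM : |B| * M ^ 2 + |C| * M + |D| < M ^ 3 := by
    have h1 : |C| * M ≤ |C| * M ^ 2 := mul_le_mul_of_nonneg_left hM2 (abs_nonneg C)
    have h2 : |D| ≤ |D| * M ^ 2 := le_mul_of_one_le_right (abs_nonneg D) (by nlinarith)
    have h3 : M ^ 3 = M ^ 2 + |B| * M ^ 2 + |C| * M ^ 2 + |D| * M ^ 2 := by
      rw [pow_succ, mul_comm]; nth_rw 1 [hM]; ring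
    have h4 : 0 < M ^ 2 := by positivity
    linarith
  have hB1 := mul_le_mul_of_nonneg_right (le_abs_self B) (sq_nonneg M)
  have hB2 := mul_le_mul_of_nonneg_right (neg_le_abs B) (sq_nonneg M)
  have hC1 := mul_le_mul_of_nonneg_right (le_abs_self C) (zero_le_one.trans hM1)
  have hC2 := mul_le_mul_of_nonneg_right (neg_le_abs C) (zero_le_one.trans hM1)
  have hcont : Continuous fun x : ℝ => x ^ 3 + B * x ^ 2 + C * x + D := by fun_prop
  obtain ⟨x, -, hx⟩ := intermediate_value_Icc (a := -M) (b := M) (by linarith) hcont.continuousOn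
    (show (0 : ℝ) ∈ _ by
      constructor
      · linarith [le_abs_self D]
      · linarith [neg_le_abs D])
  refine ⟨x, ?_⟩
  rw [hB, hC, hD] at hx
  field_simp at hx
  linarith

/-- A real binary cubic `b₀x³ + b₁x²y + b₂xy² + b₃y³` with `b₀ ≠ 0` and positive discriminant
has three distinct real roots. -/
theorem exists_cubic_roots {b₀ b₁ b₂ b₃ : ℝ} (h₀ : b₀ ≠ 0)
    (hd : 0 < cubicDisc b₀ (b₁ / 3) (b₂ / 3) b₃) :
    ∃ r s t : ℝ, r ≠ s ∧ r ≠ t ∧ s ≠ t ∧ b₁ = -b₀ * (r + s + t) ∧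
      b₂ = b₀ * (r * s + r * t + s * t) ∧ b₃ = -b₀ * (r * s * t) := by
  obtain ⟨r, hr⟩ := exists_cubic_root h₀ b₁ b₂ b₃
  have h3 : b₃ = -(b₀ * r ^ 3 + b₁ * r ^ 2 + b₂ * r) := by linarith
  have hfac : 27 * cubicDisc b₀ (b₁ / 3) (b₂ / 3) b₃ =
      ((b₁ + b₀ * r) ^ 2 - 4 * b₀ * (b₂ + b₁ * r + b₀ * r ^ 2)) *
        (3 * b₀ * r ^ 2 + 2 * b₁ * r + b₂) ^ 2 := by
    rw [h3, cubicDisc]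
    ring
  have hpos : 0 < ((b₁ + b₀ * r) ^ 2 - 4 * b₀ * (b₂ + b₁ * r + b₀ * r ^ 2)) *
        (3 * b₀ * r ^ 2 + 2 * b₁ * r + b₂) ^ 2 := by linarith
  have hq : 0 < (b₁ + b₀ * r) ^ 2 - 4 * b₀ * (b₂ + b₁ * r + b₀ * r ^ 2) :=
    pos_of_mul_pos_left hpos (sq_nonneg _)
  have hne : 3 * b₀ * r ^ 2 + 2 * b₁ * r + b₂ ≠ 0 := fun h => by simp [h] at hpos
  obtain ⟨s, t, hst, hb, hc⟩ := exists_quadratic_roots h₀ hq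
  have hb' : b₁ = -b₀ * (r + s + t) := by linarith
  have hc' : b₂ = b₀ * (r * s + r * t + s * t) := by
    rw [hb'] at hc
    linarith
  have hprod : 3 * b₀ * r ^ 2 + 2 * b₁ * r + b₂ = b₀ * (r - s) * (r - t) := by
    rw [hb', hc']; ring
  rw [hprod] at hne
  refine ⟨r, s, t, ?_, ?_, hst, hb', hc', ?_⟩
  · rintro rfl; simp at hne
  · rintro rfl; simp at hne
  · rw [h3, hb', hc']; ring

/-- A sequence of length six satisfying the recurrence given by a cubic with three distinct
roots is a combination of three geometric sequences. -/
theorem exists_three_moments {b₀ r s t : ℝ} (h₀ : b₀ ≠ 0) (hrs : r ≠ s) (hrt : r ≠ t)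
    (hst : s ≠ t) {α : ℕ → ℝ}
    (hα : ∀ i < 3, b₀ * α i + -b₀ * (r + s + t) * α (i + 1) +
      b₀ * (r * s + r * t + s * t) * α (i + 2) + -b₀ * (r * s * t) * α (i + 3) = 0) :
    ∃ p q u : ℝ, ∀ i < 6, α i = p * r ^ (5 - i) + q * s ^ (5 - i) + u * t ^ (5 - i) := by
  have hrec : ∀ i < 3, α i = (r + s + t) * α (i + 1) - (r * s + r * t + s * t) * α (i + 2) +
      r * s * t * α (i + 3) := fun i hi => by
    apply mul_left_cancel₀ h₀
    linear_combination hα i hi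
  have h1 := sub_ne_zero.2 hrs
  have h2 := sub_ne_zero.2 hrt
  have h3 := sub_ne_zero.2 hst
  obtain ⟨p, hp⟩ : ∃ p, p = (α 3 - (s + t) * α 4 + s * t * α 5) / ((r - s) * (r - t)) := ⟨_, rfl⟩
  obtain ⟨q, hq⟩ : ∃ q, q = -(α 3 - (r + t) * α 4 + r * t * α 5) / ((r - s) * (s - t)) := ⟨_, rfl⟩
  obtain ⟨u, hu⟩ : ∃ u, u = (α 3 - (r + s) * α 4 + r * s * α 5) / ((r - t) * (s - t)) := ⟨_, rfl⟩
  have e5 : α 5 = p + q + u := by rw [hp, hq, hu]; field_simp; ring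
  have e4 : α 4 = p * r + q * s + u * t := by rw [hp, hq, hu]; field_simp; ring
  have e3 : α 3 = p * r ^ 2 + q * s ^ 2 + u * t ^ 2 := by rw [hp, hq, hu]; field_simp; ring
  have e2 : α 2 = p * r ^ 3 + q * s ^ 3 + u * t ^ 3 := by
    rw [hrec 2 (by norm_num), e3, e4, e5]; ring
  have e1 : α 1 = p * r ^ 4 + q * s ^ 4 + u * t ^ 4 := by
    rw [hrec 1 (by norm_num), e2, e3, e4]; ring
  have e0 : α 0 = p * r ^ 5 + q * s ^ 5 + u * t ^ 5 := by
    rw [hrec 0 (by norm_num), e1, e2, e3]; ring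
  refine ⟨p, q, u, fun i hi => ?_⟩
  interval_cases i <;> norm_num <;> assumption

/-- The analogue of `exists_three_moments` when one of the three roots is at infinity. -/
theorem exists_two_moments_add {b₁ r s : ℝ} (h₁ : b₁ ≠ 0) (hrs : r ≠ s) {α : ℕ → ℝ}
    (hα : ∀ i < 3, b₁ * α (i + 1) + -b₁ * (r + s) * α (i + 2) + b₁ * (r * s) * α (i + 3) = 0) :
    ∃ p q u : ℝ, ∀ i < 6, α i = p * r ^ (5 - i) + q * s ^ (5 - i) + u * 0 ^ i := by
  have hrec : ∀ i < 3, α (i + 1) = (r + s) * α (i + 2) - r * s * α (i + 3) := fun i hi => by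
    apply mul_left_cancel₀ h₁
    linear_combination hα i hi
  have h1 := sub_ne_zero.2 hrs
  obtain ⟨p, hp⟩ : ∃ p, p = (α 4 - s * α 5) / (r - s) := ⟨_, rfl⟩
  obtain ⟨q, hq⟩ : ∃ q, q = (r * α 5 - α 4) / (r - s) := ⟨_, rfl⟩
  have e5 : α 5 = p + q := by rw [hp, hq]; field_simp; ring
  have e4 : α 4 = p * r + q * s := by rw [hp, hq]; field_simp; ring
  have e3 : α 3 = p * r ^ 2 + q * s ^ 2 := by
    rw [hrec 2 (by norm_num), e4, e5]; ring
  have e2 : α 2 = p * r ^ 3 + q * s ^ 3 := by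
    rw [hrec 1 (by norm_num), e3, e4]; ring
  have e1 : α 1 = p * r ^ 4 + q * s ^ 4 := by
    rw [hrec 0 (by norm_num), e2, e3]; ring
  refine ⟨p, q, α 0 - p * r ^ 5 - q * s ^ 5, fun i hi => ?_⟩
  interval_cases i
  · ring
  all_goals norm_num; assumption

/-! ### Coefficients of binary quintics -/

theorem X_pow_mul_X_pow_eq_monomial (a : ℝ) (m n : ℕ) :
    (C a * (X 0 ^ m * X 1 ^ n) : MvPolynomial (Fin 2) ℝ) =
      monomial (Finsupp.single 0 m + Finsupp.single 1 n) a := by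
  rw [X_pow_eq_monomial, X_pow_eq_monomial, monomial_mul, C_mul_monomial]
  simp

theorem coeff_sum_X_pow_mul_X_pow (a : ℕ → ℝ) {i : ℕ} (hi : i < 6) :
    (∑ k ∈ Finset.range 6, C (a k) * (X 0 ^ (5 - k) * X 1 ^ k) : MvPolynomial (Fin 2) ℝ).coeff
      (Finsupp.single 0 (5 - i) + Finsupp.single 1 i) = a i := by
  simp_rw [X_pow_mul_X_pow_eq_monomial]
  rw [coeff_sum, Finset.sum_eq_single i]
  · rw [coeff_monomial, if_pos rfl]
  · intro k _ hki
    rw [coeff_monomial, if_neg]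
    intro h
    have := DFunLike.congr_fun h 1
    simp at this
    exact hki this
  · intro h
    exact absurd (Finset.mem_range.2 hi) h

theorem eq_sum_range_coeff {f : MvPolynomial (Fin 2) ℝ} (hf : f.IsHomogeneous 5) :
    f = ∑ k ∈ Finset.range 6, C (f.coeff (Finsupp.single 0 (5 - k) + Finsupp.single 1 k)) *
      (X 0 ^ (5 - k) * X 1 ^ k) := by
  ext m
  by_cases hm : m.degree = 5
  · have hd : m 0 + m 1 = 5 := by
      simpa [Finsupp.degree_eq_sum, Fin.sum_univ_two] using hm
    have hmeq : m = Finsupp.single 0 (5 - m 1) + Finsupp.single 1 (m 1) := by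
      ext j
      fin_cases j
      · simp; omega
      · simp
    rw [hmeq, coeff_sum_X_pow_mul_X_pow _ (by omega)]
  · rw [hf.coeff_eq_zero hm]
    refine (IsHomogeneous.coeff_eq_zero (n := 5) ?_ hm).symm
    refine IsHomogeneous.sum _ _ _ fun k hk => ?_
    have h := ((isHomogeneous_C (Fin 2) (f.coeff (Finsupp.single 0 (5 - k) + Finsupp.single 1 k))).mul
      (((isHomogeneous_X ℝ (0 : Fin 2)).pow (5 - k)).mul ((isHomogeneous_X ℝ (1 : Fin 2)).pow k)))
    have : 0 + (1 * (5 - k) + 1 * k) = 5 := by have := Finset.mem_range.1 hk; omega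
    rwa [this] at h

theorem eq_sum_quinticCoeff {f : MvPolynomial (Fin 2) ℝ} (hf : f.IsHomogeneous 5) :
    f = ∑ k ∈ Finset.range 6, C ((Nat.choose 5 k : ℝ) * quinticCoeff f k) *
      (X 0 ^ (5 - k) * X 1 ^ k) := by
  conv_lhs => rw [eq_sum_range_coeff hf]
  refine Finset.sum_congr rfl fun k hk => ?_
  have : (Nat.choose 5 k : ℝ) ≠ 0 :=
    Nat.cast_ne_zero.2 (Nat.choose_pos (by have := Finset.mem_range.1 hk; omega)).ne'
  rw [quinticCoeff, mul_div_cancel₀ _ this]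

/-- A sum of fifth powers of linear combinations of `L` and `M`, expanded in `L` and `M`. -/
theorem sum_linear_pow_five {r : ℕ} (c p q : Fin r → ℝ) (L M : MvPolynomial (Fin 2) ℝ) :
    ∑ j, C (c j) * (C (p j) * L + C (q j) * M) ^ 5 =
      ∑ k ∈ Finset.range 6, C ((Nat.choose 5 k : ℝ) * ∑ j, c j * p j ^ (5 - k) * q j ^ k) *
        (L ^ (5 - k) * M ^ k) := by
  simp_rw [Finset.mul_sum, map_sum, Finset.sum_mul]
  rw [Finset.sum_comm]
  refine Finset.sum_congr rfl fun j _ => ?_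
  simp only [Finset.sum_range_succ, Finset.sum_range_zero, map_mul, map_pow, Nat.choose,
    Nat.cast_one, map_one]
  norm_num [Nat.choose]
  simp only [show (C 5 : MvPolynomial (Fin 2) ℝ) = 5 from map_ofNat C 5,
    show (C 10 : MvPolynomial (Fin 2) ℝ) = 10 from map_ofNat C 10]
  ring

theorem quinticCoeff_sum {r : ℕ} (c a b : Fin r → ℝ) {i : ℕ} (hi : i < 6) :
    quinticCoeff (∑ j, C (c j) * lin (a j) (b j) ^ 5) i = ∑ j, c j * a j ^ (5 - i) * b j ^ i := by
  have : (Nat.choose 5 i : ℝ) ≠ 0 := Nat.cast_ne_zero.2 (Nat.choose_pos (by omega)).ne'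
  simp only [quinticCoeff, lin]
  rw [sum_linear_pow_five, coeff_sum_X_pow_mul_X_pow _ hi, mul_div_cancel_left₀ _ this]

/-- A form written in independent linear coordinates, whose coefficients are moments of `r`
weighted points, is a sum of `r` powers. -/
theorem hasDecomp_of_moments {r : ℕ} {f : MvPolynomial (Fin 2) ℝ} {a b a' b' : ℝ}
    (hdet : a * b' - a' * b ≠ 0) {α : ℕ → ℝ}
    (hf : f = ∑ k ∈ Finset.range 6, C ((Nat.choose 5 k : ℝ) * α k) *
      (lin a b ^ (5 - k) * lin a' b' ^ k))
    (c p q : Fin r → ℝ) (hpq : ∀ j, p j ≠ 0 ∨ q j ≠ 0)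
    (hα : ∀ i < 6, α i = ∑ j, c j * p j ^ (5 - i) * q j ^ i) : HasDecomp f 5 r := by
  refine ⟨c, fun j => p j * a + q j * a', fun j => p j * b + q j * b', fun j hj => ?_, ?_⟩
  · obtain ⟨h1, h2⟩ := Prod.mk.inj hj
    have hp : p j = 0 := by
      apply mul_right_cancel₀ hdet
      linear_combination b' * h1 - a' * h2
    have hq : q j = 0 := by
      apply mul_right_cancel₀ hdet
      linear_combination a * h2 - b * h1
    exact (hpq j).elim (· hp) (· hq)
  · have hlin : ∀ j, lin (p j * a + q j * a') (p j * b + q j * b') =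
        C (p j) * lin a b + C (q j) * lin a' b' := fun j => by
      simp only [lin, map_add, map_mul]; ring
    simp_rw [hlin]
    rw [sum_linear_pow_five, hf]
    refine Finset.sum_congr rfl fun k hk => ?_
    rw [hα k (Finset.mem_range.1 hk)]

theorem lin_one_zero : lin 1 0 = X 0 := by simp [lin]

theorem lin_zero_one : lin 0 1 = X 1 := by simp [lin]

theorem hasDecomp_of_quinticCoeff {r : ℕ} {f : MvPolynomial (Fin 2) ℝ} (hf : f.IsHomogeneous 5)
    (c p q : Fin r → ℝ) (hpq : ∀ j, p j ≠ 0 ∨ q j ≠ 0)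
    (hα : ∀ i < 6, quinticCoeff f i = ∑ j, c j * p j ^ (5 - i) * q j ^ i) : HasDecomp f 5 r := by
  refine hasDecomp_of_moments (a := 1) (b := 0) (a' := 0) (b' := 1) (by norm_num) ?_ c p q hpq hα
  rw [lin_one_zero, lin_zero_one]
  exact eq_sum_quinticCoeff hf

theorem HasDecomp.succ {f : MvPolynomial (Fin 2) ℝ} {d r : ℕ} (h : HasDecomp f d r) :
    HasDecomp f d (r + 1) := by
  obtain ⟨c, a, b, hab, hf⟩ := h
  refine ⟨Fin.cons 0 c, Fin.cons 1 a, Fin.cons 0 b, fun j => ?_, ?_⟩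
  · refine Fin.cases ?_ (fun j => ?_) j
    · simp
    · simpa using hab j
  · rw [Fin.sum_univ_succ]
    simpa using hf

theorem HasDecomp.mono {f : MvPolynomial (Fin 2) ℝ} {d r s : ℕ} (h : HasDecomp f d r)
    (hrs : r ≤ s) : HasDecomp f d s := by
  induction s, hrs using Nat.le_induction with
  | base => exact h
  | succ n _ ih => exact ih.succ

theorem realRank_le_iff {f : MvPolynomial (Fin 2) ℝ} {d r s : ℕ} (h : HasDecomp f d s) :
    realRank f d ≤ r ↔ HasDecomp f d r :=
  ⟨fun hr => HasDecomp.mono (Nat.sInf_mem (s := {r | HasDecomp f d r}) ⟨s, h⟩) hr,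
    fun hr => Nat.sInf_le hr⟩

/-! ### The catalecticant of a sum of powers -/

theorem catalecticant_rank_le_two {f : MvPolynomial (Fin 2) ℝ} (h : HasDecomp f 5 2) :
    (catalecticant f).rank ≤ 2 := by
  obtain ⟨c, a, b, -, rfl⟩ := h
  have hfac : catalecticant (∑ j, C (c j) * lin (a j) (b j) ^ 5) =
      (Matrix.of fun (i : Fin 3) (j : Fin 2) => c j * a j ^ (2 - i.val) * b j ^ i.val) *
        (Matrix.of fun (j : Fin 2) (i : Fin 4) => a j ^ (3 - i.val) * b j ^ i.val) := by
    ext i k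
    rw [Matrix.mul_apply, catalecticant, Matrix.of_apply, quinticCoeff_sum _ _ _ (by omega)]
    refine Finset.sum_congr rfl fun j _ => ?_
    simp only [Matrix.of_apply]
    rw [show 5 - (i.val + k.val) = (2 - i.val) + (3 - k.val) by omega, pow_add, pow_add]
    ring
  rw [hfac]
  exact (Matrix.rank_mul_le_left _ _).trans (Matrix.rank_le_width _)

theorem apolarCoeff_zero (f : MvPolynomial (Fin 2) ℝ) :
    apolarCoeff f 0 = quinticCoeff f 1 * (quinticCoeff f 3 * quinticCoeff f 5 - quinticCoeff f 4 ^ 2)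
      - quinticCoeff f 2 * (quinticCoeff f 2 * quinticCoeff f 5 - quinticCoeff f 3 * quinticCoeff f 4)
      + quinticCoeff f 3 * (quinticCoeff f 2 * quinticCoeff f 4 - quinticCoeff f 3 ^ 2) := by
  simp [apolarCoeff, Matrix.det_fin_three, catalecticant]
  ring

theorem apolarCoeff_one (f : MvPolynomial (Fin 2) ℝ) :
    apolarCoeff f 1 = -(quinticCoeff f 0 *
        (quinticCoeff f 3 * quinticCoeff f 5 - quinticCoeff f 4 ^ 2)
      - quinticCoeff f 2 * (quinticCoeff f 1 * quinticCoeff f 5 - quinticCoeff f 2 * quinticCoeff f 4)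
      + quinticCoeff f 3 *
        (quinticCoeff f 1 * quinticCoeff f 4 - quinticCoeff f 2 * quinticCoeff f 3)) := by
  simp [apolarCoeff, Matrix.det_fin_three, catalecticant, Fin.succAbove, Fin.lt_def]
  ring

theorem apolarCoeff_two (f : MvPolynomial (Fin 2) ℝ) :
    apolarCoeff f 2 = quinticCoeff f 0 *
        (quinticCoeff f 2 * quinticCoeff f 5 - quinticCoeff f 3 * quinticCoeff f 4)
      - quinticCoeff f 1 * (quinticCoeff f 1 * quinticCoeff f 5 - quinticCoeff f 2 * quinticCoeff f 4)
      + quinticCoeff f 3 * (quinticCoeff f 1 * quinticCoeff f 3 - quinticCoeff f 2 ^ 2) := by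
  simp [apolarCoeff, Matrix.det_fin_three, catalecticant, Fin.succAbove, Fin.lt_def]
  ring

theorem apolarCoeff_three (f : MvPolynomial (Fin 2) ℝ) :
    apolarCoeff f 3 = -(quinticCoeff f 0 *
        (quinticCoeff f 2 * quinticCoeff f 4 - quinticCoeff f 3 ^ 2)
      - quinticCoeff f 1 * (quinticCoeff f 1 * quinticCoeff f 4 - quinticCoeff f 2 * quinticCoeff f 3)
      + quinticCoeff f 2 * (quinticCoeff f 1 * quinticCoeff f 3 - quinticCoeff f 2 ^ 2)) := by
  simp [apolarCoeff, Matrix.det_fin_three, catalecticant, Fin.succAbove, Fin.lt_def]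
  ring

/-- The signed maximal minors span the kernel of the catalecticant. -/
theorem apolarCoeff_recurrence (f : MvPolynomial (Fin 2) ℝ) {i : ℕ} (hi : i < 3) :
    apolarCoeff f 0 * quinticCoeff f i + apolarCoeff f 1 * quinticCoeff f (i + 1) +
      apolarCoeff f 2 * quinticCoeff f (i + 2) + apolarCoeff f 3 * quinticCoeff f (i + 3) = 0 := by
  rw [apolarCoeff_zero, apolarCoeff_one, apolarCoeff_two, apolarCoeff_three]
  interval_cases i <;> ring

theorem hasDecomp_three_of_I12_pos {f : MvPolynomial (Fin 2) ℝ} (hf : f.IsHomogeneous 5)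
    (h : 0 < I12 f) : HasDecomp f 5 3 := by
  have hrec := fun i (hi : i < 3) => apolarCoeff_recurrence f hi
  rw [I12] at h
  generalize apolarCoeff f 0 = b₀ at h hrec
  generalize apolarCoeff f 1 = b₁ at h hrec
  generalize apolarCoeff f 2 = b₂ at h hrec
  generalize apolarCoeff f 3 = b₃ at h hrec
  by_cases h₀ : b₀ = 0
  · subst h₀
    have hd : 0 < b₁ ^ 2 * (b₂ ^ 2 - 4 * b₁ * b₃) := by
      simp only [cubicDisc] at h
      linarith
    have h₁ : b₁ ≠ 0 := by rintro rfl; simp at hd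
    obtain ⟨r, s, hrs, rfl, rfl⟩ := exists_quadratic_roots h₁
      (pos_of_mul_pos_right hd (sq_nonneg b₁))
    obtain ⟨p, q, u, hα⟩ := exists_two_moments_add h₁ hrs (α := quinticCoeff f)
      (fun i hi => by linarith [hrec i hi])
    refine hasDecomp_of_quinticCoeff hf ![p, q, u] ![r, s, 1] ![1, 1, 0] ?_ ?_
    · intro j; fin_cases j <;> simp
    · intro i hi
      rw [hα i hi, Fin.sum_univ_three]
      simp
  · obtain ⟨r, s, t, hrs, hrt, hst, rfl, rfl, rfl⟩ := exists_cubic_roots h₀ h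
    obtain ⟨p, q, u, hα⟩ := exists_three_moments h₀ hrs hrt hst hrec
    refine hasDecomp_of_quinticCoeff hf ![p, q, u] ![r, s, t] ![1, 1, 1] ?_ ?_
    · intro j; fin_cases j <;> simp
    · intro i hi
      rw [hα i hi, Fin.sum_univ_three]
      simp

theorem exists_lin_eq_C_mul_lin {a b a' b' : ℝ} (h : (a, b) ≠ (0, 0)) (hdet : a * b' - a' * b = 0) :
    ∃ k, lin a' b' = C k * lin a b := by
  by_cases ha : a = 0
  · subst ha
    have hb : b ≠ 0 := fun hb => h (by rw [hb])
    have ha' : a' = 0 := by simpa [hb] using hdet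
    refine ⟨b' / b, ?_⟩
    simp only [lin, ha', mul_add, ← mul_assoc, ← C_mul]
    rw [div_mul_cancel₀ _ hb, mul_zero]
  · refine ⟨a' / a, ?_⟩
    simp only [lin, mul_add, ← mul_assoc, ← C_mul]
    rw [div_mul_cancel₀ _ ha, show a' / a * b = b' by field_simp; linarith]

theorem hasDecomp_two_of_eq {f : MvPolynomial (Fin 2) ℝ} {c c' a b a' b' : ℝ}
    (h : (a, b) ≠ (0, 0)) (h' : (a', b') ≠ (0, 0))
    (hf : f = C c * lin a b ^ 5 + C c' * lin a' b' ^ 5) : HasDecomp f 5 2 := by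
  refine ⟨![c, c'], ![a, a'], ![b, b'], fun j => ?_, ?_⟩
  · fin_cases j
    · exact h
    · exact h'
  · rw [hf, Fin.sum_univ_two]
    rfl

/-- Two proportional linear forms contribute a single power. -/
theorem hasDecomp_two_of_proportional {f : MvPolynomial (Fin 2) ℝ} {c c' c'' a b a' b' a'' b'' : ℝ}
    (h : (a, b) ≠ (0, 0)) (h'' : (a'', b'') ≠ (0, 0)) (hdet : a * b' - a' * b = 0)
    (hf : f = C c * lin a b ^ 5 + C c' * lin a' b' ^ 5 + C c'' * lin a'' b'' ^ 5) :
    HasDecomp f 5 2 := by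
  obtain ⟨k, hk⟩ := exists_lin_eq_C_mul_lin h hdet
  refine hasDecomp_two_of_eq (c := c + c' * k ^ 5) (c' := c'') h h'' ?_
  rw [hf, hk]
  simp only [map_add, map_mul, map_pow]
  ring

theorem cubicDisc_smul_prod (l a b a' b' a'' b'' : ℝ) :
    cubicDisc (l * (b * b' * b'')) (-(l * (a * b' * b'' + b * a' * b'' + b * b' * a'')) / 3)
      (l * (a * a' * b'' + a * b' * a'' + b * a' * a'') / 3) (-(l * (a * a' * a''))) =
    l ^ 4 * ((a * b' - a' * b) * (a * b'' - a'' * b) * (a' * b'' - a'' * b')) ^ 2 / 27 := by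
  simp only [cubicDisc]
  ring

theorem I12_sum_three (c a b : Fin 3 → ℝ) :
    I12 (∑ j, C (c j) * lin (a j) (b j) ^ 5) = (c 0 * c 1 * c 2) ^ 4 *
      ((a 0 * b 1 - a 1 * b 0) * (a 0 * b 2 - a 2 * b 0) * (a 1 * b 2 - a 2 * b 1)) ^ 10 / 27 := by
  obtain ⟨V, hV⟩ : ∃ V, V = (a 0 * b 1 - a 1 * b 0) * (a 0 * b 2 - a 2 * b 0) *
    (a 1 * b 2 - a 2 * b 1) := ⟨_, rfl⟩
  have hq := fun i (hi : i < 6) => quinticCoeff_sum c a b hi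
  simp only [Fin.sum_univ_three] at hq ⊢
  rw [I12, apolarCoeff_zero, apolarCoeff_one, apolarCoeff_two, apolarCoeff_three,
    hq 0 (by norm_num), hq 1 (by norm_num), hq 2 (by norm_num), hq 3 (by norm_num),
    hq 4 (by norm_num), hq 5 (by norm_num), ← hV]
  norm_num only
  generalize c 0 = c₀ at *
  generalize c 1 = c₁ at *
  generalize c 2 = c₂ at *
  generalize a 0 = a₀ at *
  generalize a 1 = a₁ at *
  generalize a 2 = a₂ at *
  generalize b 0 = b₀ at *
  generalize b 1 = b₁ at *
  generalize b 2 = b₂ at *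
  have key := cubicDisc_smul_prod (c₀ * c₁ * c₂ * V ^ 2) a₀ b₀ a₁ b₁ a₂ b₂
  rw [← hV] at key
  trans (c₀ * c₁ * c₂ * V ^ 2) ^ 4 * V ^ 2 / 27
  · rw [← key]
    congr 1
    · rw [hV]; ring
    · rw [hV]; ring
    · rw [hV]; ring
    · rw [hV]; ring
  · ring

theorem I12_pos_or_hasDecomp_two {f : MvPolynomial (Fin 2) ℝ} (h : HasDecomp f 5 3) :
    0 < I12 f ∨ HasDecomp f 5 2 := by
  obtain ⟨c, a, b, hab, rfl⟩ := h
  rw [I12_sum_three, or_iff_not_imp_left]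
  intro hn
  have hs := Fin.sum_univ_three fun j => C (c j) * lin (a j) (b j) ^ 5
  have hz : c 0 * c 1 * c 2 *
      ((a 0 * b 1 - a 1 * b 0) * (a 0 * b 2 - a 2 * b 0) * (a 1 * b 2 - a 2 * b 1)) = 0 := by
    by_contra hne
    obtain ⟨h1, h2⟩ := mul_ne_zero_iff.1 hne
    exact hn (by positivity)
  simp only [mul_eq_zero] at hz
  rcases hz with ((h0 | h1) | h2) | ((h01 | h02) | h12)
  · exact hasDecomp_two_of_eq (c := c 1) (c' := c 2) (hab 1) (hab 2) (by rw [hs, h0]; simp)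
  · exact hasDecomp_two_of_eq (c := c 0) (c' := c 2) (hab 0) (hab 2) (by rw [hs, h1]; simp)
  · exact hasDecomp_two_of_eq (c := c 0) (c' := c 1) (hab 0) (hab 1) (by rw [hs, h2]; simp)
  · exact hasDecomp_two_of_proportional (hab 0) (hab 2) h01 hs
  · exact hasDecomp_two_of_proportional (c := c 0) (c' := c 2) (c'' := c 1) (hab 0) (hab 1) h02
      (by rw [hs]; ring)
  · exact hasDecomp_two_of_proportional (c := c 1) (c' := c 2) (c'' := c 0) (hab 1) (hab 0) h12
      (by rw [hs]; ring)

theorem I12_eq_zero_of_hasDecomp_two {f : MvPolynomial (Fin 2) ℝ} (h : HasDecomp f 5 2) :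
    I12 f = 0 := by
  obtain ⟨c, a, b, hab, rfl⟩ := h
  have := I12_sum_three (Fin.cons 0 c) (Fin.cons 1 a) (Fin.cons 0 b)
  rw [Fin.sum_univ_succ] at this
  simpa using this

/-! ### Squarefree forms -/

theorem SquarefreeC.not_sq_dvd {f u : MvPolynomial (Fin 2) ℝ} (hf : SquarefreeC f)
    (hu : constantCoeff u = 0) : ¬ u * u ∣ f := by
  intro hdvd
  have h1 := hf (map (algebraMap ℝ ℂ) u) (by
    rw [← map_mul]
    exact _root_.map_dvd _ hdvd)
  have h2 := h1.map constantCoeff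
  rw [constantCoeff_map, hu, map_zero] at h2
  exact not_isUnit_zero h2

theorem constantCoeff_lin (a b : ℝ) : constantCoeff (lin a b) = 0 := by simp [lin]

theorem not_hasDecomp_one {f : MvPolynomial (Fin 2) ℝ} (hf : SquarefreeC f) :
    ¬ HasDecomp f 5 1 := by
  rintro ⟨c, a, b, -, rfl⟩
  refine hf.not_sq_dvd (constantCoeff_lin (a 0) (b 0)) ⟨C (c 0) * lin (a 0) (b 0) ^ 3, ?_⟩
  rw [Fin.sum_univ_one]
  ring

/-! ### Quintics with a pair of complex conjugate roots -/

theorem hasDecomp_four_of_moments {f : MvPolynomial (Fin 2) ℝ} {a b a' b' : ℝ}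
    (hdet : a * b' - a' * b ≠ 0) {α : ℕ → ℝ}
    (hf : f = ∑ k ∈ Finset.range 6, C ((Nat.choose 5 k : ℝ) * α k) *
      (lin a b ^ (5 - k) * lin a' b' ^ k))
    (h₀ : α 2 * α 4 - α 3 ^ 2 ≠ 0) (h₁ : α 1 * α 3 - α 2 ^ 2 ≠ 0)
    (hT : 0 < (α 2 * α 4 - α 3 ^ 2) + (α 1 * α 3 - α 2 ^ 2)) : HasDecomp f 5 4 := by
  obtain ⟨r, s, p, q, e1, e2, e3, e4⟩ := exists_two_moments h₀ h₁ (apolar_disc_pos hT)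
  refine hasDecomp_of_moments hdet hf ![p, q, α 0 - p - q, α 5 - p * r ^ 5 - q * s ^ 5]
    ![1, 1, 1, 0] ![r, s, 0, 1] ?_ ?_
  · intro j; fin_cases j <;> simp
  · intro i hi
    simp only [Fin.sum_univ_four]
    interval_cases i <;> simp <;> assumption

theorem hasDecomp_four_of_sq_add_sq_mul {f : MvPolynomial (Fin 2) ℝ} {a b a' b' g₀ g₁ g₂ g₃ : ℝ}
    (hdet : a * b' - a' * b ≠ 0) (hg : g₀ ≠ g₂ ∨ g₁ ≠ g₃)
    (hf : f = (lin a b ^ 2 + lin a' b' ^ 2) * (C g₀ * lin a b ^ 3 + C g₁ * lin a b ^ 2 * lin a' b' +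
      C g₂ * lin a b * lin a' b' ^ 2 + C g₃ * lin a' b' ^ 3)) : HasDecomp f 5 4 := by
  obtain ⟨t, hT, hE₀, hE₁⟩ := exists_rotation hg
  have hs : (0 : ℝ) < 1 + t ^ 2 := by positivity
  obtain ⟨w, hw⟩ : ∃ w, w = 1 + t ^ 2 := ⟨_, rfl⟩
  rw [← hw] at hs
  obtain ⟨U, hU⟩ : ∃ U, U = lin ((a + t * a') / w) ((b + t * b') / w) := ⟨_, rfl⟩
  obtain ⟨V, hV⟩ : ∃ V, V = lin ((a' - t * a) / w) ((b' - t * b) / w) := ⟨_, rfl⟩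
  have hL : lin a b = U - C t * V := by
    have ha : a = (a + t * a') / w - t * ((a' - t * a) / w) := by field_simp; rw [hw]; ring
    have hb : b = (b + t * b') / w - t * ((b' - t * b) / w) := by field_simp; rw [hw]; ring
    conv_lhs => rw [ha, hb]
    rw [hU, hV]
    simp only [lin, map_sub, map_mul]
    ring
  have hM : lin a' b' = C t * U + V := by
    have ha : a' = t * ((a + t * a') / w) + (a' - t * a) / w := by field_simp; rw [hw]; ring
    have hb : b' = t * ((b + t * b') / w) + (b' - t * b) / w := by field_simp; rw [hw]; ring
    conv_lhs => rw [ha, hb]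
    rw [hU, hV]
    simp only [lin, map_add, map_mul]
    ring
  obtain ⟨G₀, hG₀⟩ : ∃ G, G = rotCoeff₀ g₀ g₁ g₂ g₃ t := ⟨_, rfl⟩
  obtain ⟨G₁, hG₁⟩ : ∃ G, G = rotCoeff₁ g₀ g₁ g₂ g₃ t := ⟨_, rfl⟩
  obtain ⟨G₂, hG₂⟩ : ∃ G, G = rotCoeff₂ g₀ g₁ g₂ g₃ t := ⟨_, rfl⟩
  obtain ⟨G₃, hG₃⟩ : ∃ G, G = rotCoeff₃ g₀ g₁ g₂ g₃ t := ⟨_, rfl⟩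
  have hf' : f = C w * (U ^ 2 + V ^ 2) *
      (C G₀ * U ^ 3 + C G₁ * U ^ 2 * V + C G₂ * U * V ^ 2 + C G₃ * V ^ 3) := by
    have hc := rotCoeff_spec (C g₀) (C g₁) (C g₂) (C g₃) (C t) U V
    have hC2 : (C 2 : MvPolynomial (Fin 2) ℝ) = 2 := map_ofNat C 2
    have hC3 : (C 3 : MvPolynomial (Fin 2) ℝ) = 3 := map_ofNat C 3
    have hC₀ : rotCoeff₀ (C g₀) (C g₁) (C g₂) (C g₃) (C t) = (C G₀ : MvPolynomial (Fin 2) ℝ) := by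
      rw [hG₀]; simp [rotCoeff₀]
    have hC₁ : rotCoeff₁ (C g₀) (C g₁) (C g₂) (C g₃) (C t) = (C G₁ : MvPolynomial (Fin 2) ℝ) := by
      rw [hG₁]; simp [rotCoeff₁, hC2, hC3]
    have hC₂ : rotCoeff₂ (C g₀) (C g₁) (C g₂) (C g₃) (C t) = (C G₂ : MvPolynomial (Fin 2) ℝ) := by
      rw [hG₂]; simp [rotCoeff₂, hC2, hC3]
    have hC₃ : rotCoeff₃ (C g₀) (C g₁) (C g₂) (C g₃) (C t) = (C G₃ : MvPolynomial (Fin 2) ℝ) := by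
      rw [hG₃]; simp [rotCoeff₃]
    rw [hf, hL, hM, hc, hC₀, hC₁, hC₂, hC₃, hw]
    simp only [map_add, map_pow, map_one]
    ring
  rw [rotMinor₀, rotMinor₁, ← hG₀, ← hG₁, ← hG₂, ← hG₃] at hT
  rw [rotMinor₀, ← hG₀, ← hG₁, ← hG₂, ← hG₃] at hE₀
  rw [rotMinor₁, ← hG₀, ← hG₁, ← hG₂, ← hG₃] at hE₁
  have hw0 := hs.ne'
  let α : ℕ → ℝ := fun k => match k with
    | 0 => w * G₀
    | 1 => w * G₁ / 5
    | 2 => w * (G₀ + G₂) / 10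
    | 3 => w * (G₁ + G₃) / 10
    | 4 => w * G₂ / 5
    | _ => w * G₃
  have e₀ : α 2 * α 4 - α 3 ^ 2 = w ^ 2 / 100 * (2 * G₂ * (G₀ + G₂) - (G₁ + G₃) ^ 2) := by
    simp only [α]; ring
  have e₁ : α 1 * α 3 - α 2 ^ 2 = w ^ 2 / 100 * (2 * G₁ * (G₁ + G₃) - (G₀ + G₂) ^ 2) := by
    simp only [α]; ring
  refine hasDecomp_four_of_moments (a := (a + t * a') / w) (b := (b + t * b') / w)
    (a' := (a' - t * a) / w) (b' := (b' - t * b) / w) (α := α) ?_ ?_ ?_ ?_ ?_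
  · have : (a + t * a') / w * ((b' - t * b) / w) - (a' - t * a) / w * ((b + t * b') / w) =
        (a * b' - a' * b) / w := by field_simp; rw [hw]; ring
    rw [this]
    exact div_ne_zero hdet hw0
  · rw [← hU, ← hV, hf']
    simp only [Finset.sum_range_succ, Finset.sum_range_zero, α]
    norm_num [Nat.choose]
    simp only [← C_mul]
    rw [mul_div_cancel₀ _ (by norm_num), mul_div_cancel₀ _ (by norm_num),
      mul_div_cancel₀ _ (by norm_num), mul_div_cancel₀ _ (by norm_num)]
    simp only [map_add, map_mul]
    ring
  · rw [e₀]; exact mul_ne_zero (by positivity) hE₀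
  · rw [e₁]; exact mul_ne_zero (by positivity) hE₁
  · rw [e₀, e₁, ← mul_add]; exact mul_pos (by positivity) hT

/-- The dehomogenization `f(t, 1)` of a binary quintic. -/
noncomputable def dehom (f : MvPolynomial (Fin 2) ℝ) : Polynomial ℝ :=
  ∑ k ∈ Finset.range 6, Polynomial.C (f.coeff (Finsupp.single 0 (5 - k) + Finsupp.single 1 k)) *
    Polynomial.X ^ (5 - k)

theorem coeff_dehom (f : MvPolynomial (Fin 2) ℝ) {k : ℕ} (hk : k < 6) :
    (dehom f).coeff k = f.coeff (Finsupp.single 0 k + Finsupp.single 1 (5 - k)) := by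
  simp only [dehom, Finset.sum_range_succ, Finset.sum_range_zero]
  interval_cases k <;> simp [Polynomial.coeff_C, Polynomial.coeff_X]

theorem natDegree_dehom_le (f : MvPolynomial (Fin 2) ℝ) : (dehom f).natDegree ≤ 5 := by
  refine Polynomial.natDegree_sum_le_of_forall_le _ _ fun k _ => ?_
  exact (Polynomial.natDegree_C_mul_X_pow_le _ _).trans (by omega)

theorem eq_sum_coeff_dehom {f : MvPolynomial (Fin 2) ℝ} (hf : f.IsHomogeneous 5) :
    f = ∑ k ∈ Finset.range 6, C ((dehom f).coeff (5 - k)) * (X 0 ^ (5 - k) * X 1 ^ k) := by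
  conv_lhs => rw [eq_sum_range_coeff hf]
  refine Finset.sum_congr rfl fun k hk => ?_
  have := Finset.mem_range.1 hk
  rw [coeff_dehom f (by omega), show 5 - (5 - k) = k by omega]

/-- A factorization of `f(t, 1)` with a monic quadratic factor lifts to `f`. -/
theorem eq_mul_of_dehom_eq_mul {f : MvPolynomial (Fin 2) ℝ} (hf : f.IsHomogeneous 5) {b c : ℝ}
    {h : Polynomial ℝ} (hh : h.natDegree ≤ 3)
    (hfac : dehom f = (Polynomial.X ^ 2 + Polynomial.C b * Polynomial.X + Polynomial.C c) * h) :
    f = (X 0 ^ 2 + C b * X 0 * X 1 + C c * X 1 ^ 2) * (C (h.coeff 3) * X 0 ^ 3 +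
      C (h.coeff 2) * X 0 ^ 2 * X 1 + C (h.coeff 1) * X 0 * X 1 ^ 2 + C (h.coeff 0) * X 1 ^ 3) := by
  obtain ⟨h₀, h₁, h₂, h₃, rfl⟩ : ∃ h₀ h₁ h₂ h₃ : ℝ, h = Polynomial.C h₀ +
      Polynomial.C h₁ * Polynomial.X + Polynomial.C h₂ * Polynomial.X ^ 2 +
        Polynomial.C h₃ * Polynomial.X ^ 3 := by
    refine ⟨h.coeff 0, h.coeff 1, h.coeff 2, h.coeff 3, ?_⟩
    conv_lhs => rw [h.as_sum_range_C_mul_X_pow' (n := 4) (by omega)]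
    simp [Finset.sum_range_succ]
  have hexp : dehom f = Polynomial.C (c * h₀) + Polynomial.C (b * h₀ + c * h₁) * Polynomial.X +
      Polynomial.C (h₀ + b * h₁ + c * h₂) * Polynomial.X ^ 2 +
      Polynomial.C (h₁ + b * h₂ + c * h₃) * Polynomial.X ^ 3 +
      Polynomial.C (h₂ + b * h₃) * Polynomial.X ^ 4 + Polynomial.C h₃ * Polynomial.X ^ 5 := by
    rw [hfac]
    simp only [map_add, map_mul]
    ring
  conv_lhs => rw [eq_sum_coeff_dehom hf, hexp]
  simp only [Finset.sum_range_succ, Finset.sum_range_zero, Polynomial.coeff_add,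
    Polynomial.coeff_C_mul, Polynomial.coeff_X_pow, Polynomial.coeff_C, Polynomial.coeff_X]
  norm_num
  ring

theorem eval_dehom {f : MvPolynomial (Fin 2) ℝ} (hf : f.IsHomogeneous 5) (r s : ℝ) :
    eval ![s * r, s] f = s ^ 5 * (dehom f).eval r := by
  conv_lhs => rw [eq_sum_range_coeff hf]
  simp only [dehom, Finset.sum_range_succ, Finset.sum_range_zero]
  simp
  ring

theorem vec_one_ne_zero (r : ℝ) : (![r, 1] : Fin 2 → ℝ) ≠ 0 := fun h => by
  simpa using congrFun h 1

theorem mk_mem_projRoots {f : MvPolynomial (Fin 2) ℝ} (hf : f.IsHomogeneous 5) {r : ℝ}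
    (hr : (dehom f).eval r = 0) :
    Projectivization.mk ℝ ![r, 1] (vec_one_ne_zero r) ∈ projRoots f := by
  obtain ⟨s, hs⟩ := Projectivization.exists_smul_eq_mk_rep ℝ ![r, 1] (vec_one_ne_zero r)
  change eval _ f = 0
  rw [← hs]
  have : s • (![r, 1] : Fin 2 → ℝ) = ![(s : ℝ) * r, s] := by
    ext i; fin_cases i <;> simp [Units.smul_def]
  rw [this, eval_dehom hf, hr, mul_zero]

theorem mk_vec_one_injective :
    Function.Injective fun r : ℝ => Projectivization.mk ℝ ![r, 1] (vec_one_ne_zero r) := by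
  intro r s hrs
  obtain ⟨a, ha⟩ := (Projectivization.mk_eq_mk_iff' ℝ _ _ _ _).1 hrs
  have h1 := congrFun ha 1
  have h0 := congrFun ha 0
  simp at h0 h1
  rw [← h0, h1, one_mul]

theorem four_le_natDegree_dehom {f : MvPolynomial (Fin 2) ℝ} (hf : f.IsHomogeneous 5)
    (hsf : SquarefreeC f) : 4 ≤ (dehom f).natDegree := by
  by_contra! hlt
  refine hsf.not_sq_dvd (constantCoeff_lin 0 1) ⟨C ((dehom f).coeff 3) * X 0 ^ 3 +
    C ((dehom f).coeff 2) * X 0 ^ 2 * X 1 + C ((dehom f).coeff 1) * X 0 * X 1 ^ 2 +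
    C ((dehom f).coeff 0) * X 1 ^ 3, ?_⟩
  conv_lhs => rw [eq_sum_coeff_dehom hf]
  simp only [Finset.sum_range_succ, Finset.sum_range_zero, lin_zero_one]
  simp [Polynomial.coeff_eq_zero_of_natDegree_lt (show (dehom f).natDegree < 4 by omega),
    Polynomial.coeff_eq_zero_of_natDegree_lt (show (dehom f).natDegree < 5 by omega)]
  ring

theorem nodup_roots_dehom {f : MvPolynomial (Fin 2) ℝ} (hf : f.IsHomogeneous 5)
    (hsf : SquarefreeC f) : (dehom f).roots.Nodup := by
  classical
  have hdeg := four_le_natDegree_dehom hf hsf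
  have h0 : dehom f ≠ 0 := fun h => by simp [h] at hdeg
  rw [Multiset.nodup_iff_count_le_one]
  intro r
  by_contra! hlt
  rw [Polynomial.count_roots] at hlt
  obtain ⟨h, hh⟩ := (Polynomial.le_rootMultiplicity_iff h0).1 (Nat.succ_le_of_lt hlt)
  have hfac : dehom f = (Polynomial.X ^ 2 + Polynomial.C (-2 * r) * Polynomial.X +
      Polynomial.C (r ^ 2)) * h := by
    rw [hh]
    simp only [map_mul, map_neg, map_pow, map_ofNat, Nat.succ_eq_add_one]
    ring
  have hmonic : (Polynomial.X - Polynomial.C r).Monic := Polynomial.monic_X_sub_C r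
  have hh3 : h.natDegree ≤ 3 := by
    have hd := natDegree_dehom_le f
    rw [hh, (hmonic.pow _).natDegree_mul' (by rintro rfl; simp [hh] at h0),
      hmonic.natDegree_pow, Polynomial.natDegree_X_sub_C] at hd
    omega
  refine hsf.not_sq_dvd (constantCoeff_lin 1 (-r)) ?_
  rw [eq_mul_of_dehom_eq_mul hf hh3 hfac]
  refine Dvd.intro _ (congrArg (· * _) ?_)
  simp only [lin, map_mul, map_neg, map_pow, map_one]
  rw [show (C 2 : MvPolynomial (Fin 2) ℝ) = 2 from map_ofNat C 2]
  ring

theorem not_splits_dehom {f : MvPolynomial (Fin 2) ℝ} (hf : f.IsHomogeneous 5)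
    (hsf : SquarefreeC f) (hroots : (projRoots f).ncard = 1 ∨ (projRoots f).ncard = 3) :
    ¬ (dehom f).Splits := by
  classical
  intro hsp
  have hcard : 4 ≤ (dehom f).roots.toFinset.card := by
    rw [Multiset.toFinset_card_of_nodup (nodup_roots_dehom hf hsf), ← hsp.natDegree_eq_card_roots]
    exact four_le_natDegree_dehom hf hsf
  have hfin : (projRoots f).Finite := Set.finite_of_ncard_ne_zero (by omega)
  have hsub : (fun r : ℝ => Projectivization.mk ℝ ![r, 1] (vec_one_ne_zero r)) ''
      (dehom f).roots.toFinset ⊆ projRoots f := by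
    rintro _ ⟨r, hr, rfl⟩
    exact mk_mem_projRoots hf (Polynomial.isRoot_of_mem_roots (by simpa using hr))
  have hle := Set.ncard_le_ncard hsub hfin
  rw [Set.ncard_image_of_injective _ mk_vec_one_injective, Set.ncard_coe_finset] at hle
  omega

/-- A real polynomial that does not split has a monic quadratic factor without real roots. -/
theorem exists_quadratic_factor {p : Polynomial ℝ} (hp : ¬ p.Splits) :
    ∃ (b c : ℝ) (h : Polynomial ℝ), b ^ 2 < 4 * c ∧
      p = (Polynomial.X ^ 2 + Polynomial.C b * Polynomial.X + Polynomial.C c) * h := by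
  obtain ⟨z, hz, him⟩ : ∃ z : ℂ, Polynomial.aeval z p = 0 ∧ z.im ≠ 0 := by
    by_contra! hreal
    refine hp (Polynomial.Splits.of_splits_map (algebraMap ℝ ℂ)
      (IsAlgClosed.splits _) fun z hz => ⟨z.re, ?_⟩)
    have him := hreal z (by
      have := Polynomial.isRoot_of_mem_roots hz
      rwa [Polynomial.IsRoot, Polynomial.eval_map_algebraMap] at this)
    exact Complex.ext rfl him.symm
  obtain ⟨h, hh⟩ := Polynomial.quadratic_dvd_of_aeval_eq_zero_im_ne_zero p hz him
  refine ⟨-(2 * z.re), ‖z‖ ^ 2, h, ?_, ?_⟩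
  · have := pow_pos (abs_pos.2 him) 2
    rw [sq_abs] at this
    rw [Complex.sq_norm, Complex.normSq_apply]
    linarith
  · rw [hh, Polynomial.C_neg, neg_mul, ← sub_eq_add_neg]

theorem hasDecomp_four {f : MvPolynomial (Fin 2) ℝ} (hf : f.IsHomogeneous 5)
    (hsf : SquarefreeC f) (hroots : (projRoots f).ncard = 1 ∨ (projRoots f).ncard = 3) :
    HasDecomp f 5 4 := by
  obtain ⟨b, c, h, hbc, hfac⟩ := exists_quadratic_factor (not_splits_dehom hf hsf hroots)
  have hh3 : h.natDegree ≤ 3 := by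
    have hd := natDegree_dehom_le f
    have h0 : h ≠ 0 := by
      rintro rfl
      have := four_le_natDegree_dehom hf hsf
      simp [hfac] at this
    have hq : (Polynomial.X ^ 2 + Polynomial.C b * Polynomial.X + Polynomial.C c).natDegree = 2 := by
      compute_degree!
    have hq0 : Polynomial.X ^ 2 + Polynomial.C b * Polynomial.X + Polynomial.C c ≠ 0 := by
      intro h; simp [h] at hq
    rw [hfac, Polynomial.natDegree_mul hq0 h0, hq] at hd
    omega
  have hf1 := eq_mul_of_dehom_eq_mul hf hh3 hfac
  generalize h.coeff 0 = h₀ at hf1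
  generalize h.coeff 1 = h₁ at hf1
  generalize h.coeff 2 = h₂ at hf1
  generalize h.coeff 3 = h₃ at hf1
  obtain ⟨m, hm0, hm⟩ : ∃ m : ℝ, 0 < m ∧ m ^ 2 = c - b ^ 2 / 4 :=
    ⟨√(c - b ^ 2 / 4), Real.sqrt_pos.2 (by linarith), Real.sq_sqrt (by linarith)⟩
  have hX1 : (X 1 : MvPolynomial (Fin 2) ℝ) = C m⁻¹ * lin 0 m := by
    simp only [lin, map_zero, zero_mul, zero_add, ← mul_assoc, ← C_mul]
    rw [inv_mul_cancel₀ hm0.ne', map_one, one_mul]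
  have hX0 : (X 0 : MvPolynomial (Fin 2) ℝ) = lin 1 (b / 2) - C (b / 2 * m⁻¹) * lin 0 m := by
    rw [map_mul, mul_assoc, ← hX1]
    simp [lin]
  have hquad : (X 0 ^ 2 + C b * X 0 * X 1 + C c * X 1 ^ 2 : MvPolynomial (Fin 2) ℝ) =
      lin 1 (b / 2) ^ 2 + lin 0 m ^ 2 := by
    have hc : c = m ^ 2 + (b / 2) ^ 2 := by rw [hm]; ring
    have hb : (C b : MvPolynomial (Fin 2) ℝ) = 2 * C (b / 2) := by
      rw [← map_ofNat C 2, ← C_mul]; congr 1; ring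
    rw [hc, hb]
    simp only [lin, map_add, map_pow, map_zero, map_one]
    ring
  rw [hquad, hX1, hX0] at hf1
  generalize b / 2 = k at *
  generalize hL : lin 1 k = L at *
  generalize hM : lin 0 m = M at *
  obtain ⟨g₀, g₁, g₂, g₃, hg⟩ : ∃ g₀ g₁ g₂ g₃ : ℝ, f = (L ^ 2 + M ^ 2) *
      (C g₀ * L ^ 3 + C g₁ * L ^ 2 * M + C g₂ * L * M ^ 2 + C g₃ * M ^ 3) := by
    refine ⟨h₃, -3 * h₃ * (k * m⁻¹) + h₂ * m⁻¹,
      3 * h₃ * (k * m⁻¹) ^ 2 - 2 * h₂ * (k * m⁻¹) * m⁻¹ + h₁ * m⁻¹ ^ 2,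
      -h₃ * (k * m⁻¹) ^ 3 + h₂ * (k * m⁻¹) ^ 2 * m⁻¹ - h₁ * (k * m⁻¹) * m⁻¹ ^ 2 + h₀ * m⁻¹ ^ 3, ?_⟩
    rw [hf1]
    generalize k * m⁻¹ = u
    generalize m⁻¹ = v
    simp only [map_add, map_sub, map_mul, map_pow, map_neg,
      show (C 2 : MvPolynomial (Fin 2) ℝ) = 2 from map_ofNat C 2,
      show (C 3 : MvPolynomial (Fin 2) ℝ) = 3 from map_ofNat C 3]
    ring
  have hne : g₀ ≠ g₂ ∨ g₁ ≠ g₃ := by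
    by_contra! hcon
    obtain ⟨rfl, rfl⟩ := hcon
    refine hsf.not_sq_dvd (u := L ^ 2 + M ^ 2) ?_ ⟨C g₀ * L + C g₁ * M, ?_⟩
    · rw [← hL, ← hM]
      simp [constantCoeff_lin]
    · rw [hg]; ring
  rw [← hL, ← hM] at hg
  exact hasDecomp_four_of_sq_add_sq_mul (by simpa using hm0.ne') hne hg

/-- A real binary quintic with distinct complex roots and exactly one or exactly three real
roots has real rank at most 4 and at least 2; if its catalecticant matrix has maximal rank, the
real rank is 3 or 4. The rank is 3 exactly when `I12 f > 0`, and it is 4 when `I12 f < 0`. -/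
theorem stmt15 (f : MvPolynomial (Fin 2) ℝ) (hf : f.IsHomogeneous 5)
    (hsf : SquarefreeC f) (hroots : (projRoots f).ncard = 1 ∨ (projRoots f).ncard = 3) :
    (2 ≤ realRank f 5 ∧ realRank f 5 ≤ 4) ∧
    ((catalecticant f).rank = 3 → realRank f 5 = 3 ∨ realRank f 5 = 4) ∧
    (realRank f 5 = 3 ↔ 0 < I12 f) ∧
    (I12 f < 0 → realRank f 5 = 4) := by
  have h4 := hasDecomp_four hf hsf hroots
  have hle : ∀ r, realRank f 5 ≤ r ↔ HasDecomp f 5 r := fun r => realRank_le_iff h4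
  have hr4 : realRank f 5 ≤ 4 := (hle 4).2 h4
  have hr2 : 2 ≤ realRank f 5 := by
    by_contra! hlt
    exact not_hasDecomp_one hsf ((hle 1).1 (by omega))
  refine ⟨⟨hr2, hr4⟩, fun hrank => ?_, ⟨fun h3 => ?_, fun hI => ?_⟩, fun hI => ?_⟩
  · have : ¬ realRank f 5 ≤ 2 := fun h2 => by
      have := catalecticant_rank_le_two ((hle 2).1 h2)
      omega
    omega
  · refine (I12_pos_or_hasDecomp_two ((hle 3).1 h3.le)).resolve_right fun h2 => ?_
    have := (hle 2).2 h2
    omega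
  · have h3 := (hle 3).2 (hasDecomp_three_of_I12_pos hf hI)
    have : ¬ realRank f 5 ≤ 2 := fun h2 => by
      have := I12_eq_zero_of_hasDecomp_two ((hle 2).1 h2)
      linarith
    omega
  · have : ¬ realRank f 5 ≤ 3 := fun h3 => by
      rcases I12_pos_or_hasDecomp_two ((hle 3).1 h3) with h | h
      · linarith
      · have := I12_eq_zero_of_hasDecomp_two h
        linarith
    omega
end
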